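/- arXiv:1711.02935 — 10 statements merged into one kernel-verified Lean document; each statement's English description precedes it below -/
import Mathlib

section
/- Assume (E3) with λ ≤ 0 and (−λ)·τ* ≤ 1/2. Fix τ ∈ (0, τ*) and u, v ∈ X, write ψ(w) := Ψ(τ,u,v;w), and assume ψ̲ := inf_{w ∈ D(E)} ψ(w) is finite. Then for all w₁, w₂ ∈ D(E): d(w₁,w₂)² ≤ (8τ/(3 + 2τλ))·(ψ(w₁) + ψ(w₂) − 2·ψ̲). -/
/-- The BDF2 penalization `Ψ(τ,u,v;w) = (1/τ)·d(v,w)² − (1/(4τ))·d(u,w)² + E(w)`. -/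
noncomputable def bdf2Psi {X : Type*} [MetricSpace X] (E : X → EReal) (τ : ℝ) (u v w : X) :
    EReal :=
  ((1 / τ * dist v w ^ 2 - 1 / (4 * τ) * dist u w ^ 2 : ℝ) : EReal) + E w

theorem exists_real_eq_bdf2Psi {X : Type*} [MetricSpace X] {E : X → EReal} {w : X}
    (hbot : E w ≠ ⊥) (htop : E w ≠ ⊤) (τ : ℝ) (u v : X) :
    ∃ a : ℝ, bdf2Psi E τ u v w = a := by
  lift E w to ℝ using ⟨htop, hbot⟩ with e he
  exact ⟨_, by rw [bdf2Psi, ← he, ← EReal.coe_add]⟩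

theorem iInf_bdf2Psi_le {X : Type*} [MetricSpace X] (E : X → EReal) (τ : ℝ) (u v w : X) :
    ⨅ w : {w : X // E w ≠ ⊤}, bdf2Psi E τ u v w.1 ≤ bdf2Psi E τ u v w := by
  by_cases h : E w = ⊤
  · simp only [bdf2Psi, h, EReal.coe_add_top, le_top]
  · exact iInf_le (fun w : {w : X // E w ≠ ⊤} => bdf2Psi E τ u v w.1) ⟨w, h⟩

/-- Under assumption (E3), if `ψ̲ := inf_{D(E)} Ψ(τ,u,v;·)` is finite, then
any two points of the domain satisfy the quantitative estimate
`d(w₁,w₂)² ≤ (8τ/(3+2τλ))·(ψ(w₁)+ψ(w₂)−2ψ̲)`. -/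
theorem bdf2Psi_cauchy_estimate {X : Type*} [MetricSpace X] [CompleteSpace X]
    [TopologicalSpace.SeparableSpace X]
    (E : X → EReal) (hbot : ∀ w, E w ≠ ⊥)
    (τs lam : ℝ) (hτs : 0 < τs) (hlam : lam ≤ 0) (hlamτs : (-lam) * τs ≤ 1 / 2)
    (hE3 : ∀ τ ∈ Set.Ioo (0 : ℝ) τs, ∀ u v γ₀ γ₁ : X, E γ₀ ≠ ⊤ → E γ₁ ≠ ⊤ →
      ∃ γ : ℝ → X, ContinuousOn γ (Set.Icc 0 1) ∧ γ 0 = γ₀ ∧ γ 1 = γ₁ ∧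
        ∀ s ∈ Set.Icc (0 : ℝ) 1,
          bdf2Psi E τ u v (γ s)
            ≤ ((1 - s : ℝ) : EReal) * bdf2Psi E τ u v γ₀
              + ((s : ℝ) : EReal) * bdf2Psi E τ u v γ₁
              - ((1 / 2 * (3 / (2 * τ) + lam) * s * (1 - s) * dist γ₀ γ₁ ^ 2 : ℝ) : EReal))
    (τ : ℝ) (hτ : τ ∈ Set.Ioo 0 τs) (u v : X)
    (psibar : EReal)
    (hpsibar : psibar = ⨅ w : {w : X // E w ≠ ⊤}, bdf2Psi E τ u v w.1)
    (hfin₁ : psibar ≠ ⊥) (hfin₂ : psibar ≠ ⊤)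
    (w₁ w₂ : X) (hw₁ : E w₁ ≠ ⊤) (hw₂ : E w₂ ≠ ⊤) :
    ((dist w₁ w₂ ^ 2 : ℝ) : EReal)
      ≤ ((8 * τ / (3 + 2 * τ * lam) : ℝ) : EReal)
          * (bdf2Psi E τ u v w₁ + bdf2Psi E τ u v w₂ - ((2 : ℝ) : EReal) * psibar) := by
  obtain ⟨a, ha⟩ := exists_real_eq_bdf2Psi (hbot w₁) hw₁ τ u v
  obtain ⟨b, hb⟩ := exists_real_eq_bdf2Psi (hbot w₂) hw₂ τ u v
  obtain ⟨γ, -, -, -, hγ⟩ := hE3 τ hτ u v w₁ w₂ hw₁ hw₂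
  have hmid := (iInf_bdf2Psi_le E τ u v (γ (1 / 2))).trans (hγ (1 / 2) (by norm_num))
  rw [← hpsibar, ha, hb] at hmid
  rw [ha, hb]
  lift psibar to ℝ using ⟨hfin₂, hfin₁⟩ with m
  norm_cast at hmid ⊢
  obtain ⟨hτ₀, hτ₁⟩ := hτ
  have hpos : 0 < 3 + 2 * τ * lam := by nlinarith
  have hscale : 1 / 2 * (3 / (2 * τ) + lam) * (1 / 2) * (1 - 1 / 2) * dist w₁ w₂ ^ 2
      = (3 + 2 * τ * lam) * dist w₁ w₂ ^ 2 / (16 * τ) := by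
    field_simp
    ring
  rw [hscale] at hmid
  have hdiv : (3 + 2 * τ * lam) * dist w₁ w₂ ^ 2 / (16 * τ) ≤ (a + b) / 2 - m := by linarith
  rw [div_le_iff₀ (by positivity)] at hdiv
  rw [div_mul_eq_mul_div, le_div_iff₀ hpos]
  linarith
end

section
/- Assume (E1), (E2) and (E3) with λ ≤ 0 and (−λ)·τ* ≤ 1/2. Then for every τ ∈ (0, τ*) and all u, v ∈ X there exists a unique minimizer w* ∈ D(E) of the function w ↦ Ψ(τ,u,v;w), i.e. there is exactly one w* ∈ X with E(w*) < +∞ and Ψ(τ,u,v;w*) ≤ Ψ(τ,u,v;w) for all w ∈ X. -/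
open Filter

/-- A proper, sequentially lower semicontinuous functional on a complete metric space that is
bounded below and satisfies a uniform midpoint convexity inequality has a unique minimizer. -/
theorem existsUnique_minimizer_of_midpoint_convex {X : Type*} [MetricSpace X] [CompleteSpace X]
    (F : X → EReal) (hdom : ∃ w, F w ≠ ⊤) (B : ℝ) (hB : ∀ w, (B : EReal) ≤ F w)
    (hlsc : ∀ (x : ℕ → X) (y : X), Tendsto x atTop (nhds y) →
      F y ≤ liminf (fun n => F (x n)) atTop)
    (κ : ℝ) (hκ : 0 < κ)
    (hmid : ∀ (x y : X) (a b : ℝ), F x = a → F y = b →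
      ∃ z, F z ≤ (((a + b) / 2 - κ * dist x y ^ 2 : ℝ) : EReal)) :
    ∃! x, F x ≠ ⊤ ∧ ∀ y, F x ≤ F y := by
  have hreal : ∀ w, F w ≠ ⊤ → ∃ a : ℝ, F w = a := fun w hw =>
    ⟨(F w).toReal, (EReal.coe_toReal hw
      (ne_of_gt (lt_of_lt_of_le (EReal.bot_lt_coe B) (hB w)))).symm⟩
  set S : Set ℝ := {a | ∃ x, F x = a}
  have hSne : S.Nonempty := by
    obtain ⟨w, hw⟩ := hdom
    obtain ⟨a, ha⟩ := hreal w hw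
    exact ⟨a, w, ha⟩
  have hSbdd : BddBelow S := by
    refine ⟨B, ?_⟩
    rintro a ⟨x, hx⟩
    have h := hB x
    rw [hx] at h
    exact_mod_cast h
  set m := sInf S
  have hm : ∀ w, (m : EReal) ≤ F w := by
    intro w
    by_cases hw : F w = ⊤
    · simp [hw]
    · obtain ⟨a, ha⟩ := hreal w hw
      rw [ha]
      exact_mod_cast csInf_le hSbdd ⟨w, ha⟩
  have hdist : ∀ (x y : X) (a b : ℝ), F x = a → F y = b →
      κ * dist x y ^ 2 ≤ (a + b) / 2 - m := by
    intro x y a b hx hy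
    obtain ⟨z, hz⟩ := hmid x y a b hx hy
    have h : m ≤ (a + b) / 2 - κ * dist x y ^ 2 := by exact_mod_cast (hm z).trans hz
    linarith
  have hseq : ∀ n : ℕ, ∃ x : X, ∃ a : ℝ, F x = a ∧ a < m + 1 / ((n : ℝ) + 1) := by
    intro n
    obtain ⟨a, ⟨x, hx⟩, ha⟩ := exists_lt_of_csInf_lt hSne
      (show sInf S < m + 1 / ((n : ℝ) + 1) from lt_add_of_pos_right _ (by positivity))
    exact ⟨x, a, hx, ha⟩
  choose x a hxa ha using hseq
  have hcauchy : CauchySeq x := by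
    rw [Metric.cauchySeq_iff']
    intro ε hε
    obtain ⟨N, hN⟩ := exists_nat_one_div_lt (show 0 < κ * ε ^ 2 by positivity)
    refine ⟨N, fun n hn => ?_⟩
    have h := hdist (x n) (x N) _ _ (hxa n) (hxa N)
    have hnN : 1 / ((n : ℝ) + 1) ≤ 1 / ((N : ℝ) + 1) := Nat.one_div_le_one_div hn
    have hlt : κ * dist (x n) (x N) ^ 2 < κ * ε ^ 2 := by linarith [ha n, ha N]
    exact lt_of_pow_lt_pow_left₀ 2 hε.le (lt_of_mul_lt_mul_left hlt hκ.le)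
  obtain ⟨y, hy⟩ := cauchySeq_tendsto_of_complete hcauchy
  have hFy : F y ≤ m := by
    have hlim : Tendsto (fun n : ℕ => ((m + 1 / ((n : ℝ) + 1) : ℝ) : EReal)) atTop
        (nhds (m : EReal)) := by
      refine (continuous_coe_real_ereal.tendsto m).comp ?_
      simpa using (tendsto_const_nhds (x := m)).add
        (tendsto_one_div_add_atTop_nhds_zero_nat (𝕜 := ℝ))
    refine (hlsc x y hy).trans ?_
    rw [← hlim.liminf_eq]
    refine liminf_le_liminf (Eventually.of_forall fun n => ?_)
    simp only [hxa n]
    exact_mod_cast (ha n).le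
  have hFym : F y = m := le_antisymm hFy (hm y)
  refine ⟨y, ⟨by simp [hFym], fun w => hFy.trans (hm w)⟩, ?_⟩
  rintro z ⟨-, hz⟩
  have hFz : F z = m := le_antisymm ((hz y).trans hFy) (hm z)
  have h := hdist z y m m hFz hFym
  have hsq : dist z y ^ 2 ≤ 0 := by
    by_contra! hpos
    nlinarith [mul_pos hκ hpos]
  exact dist_eq_zero.mp (pow_eq_zero_iff two_ne_zero |>.mp (le_antisymm hsq (sq_nonneg _)))

/-- Adding a continuous real function preserves sequential lower semicontinuity. -/
theorem coe_add_le_liminf_of_continuous {X : Type*} [TopologicalSpace X] (E : X → EReal)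
    (hE : ∀ (x : ℕ → X) (y : X), Tendsto x atTop (nhds y) →
      E y ≤ liminf (fun n => E (x n)) atTop)
    (q : X → ℝ) (hq : Continuous q) (x : ℕ → X) (y : X) (hx : Tendsto x atTop (nhds y)) :
    (q y : EReal) + E y ≤ liminf (fun n => (q (x n) : EReal) + E (x n)) atTop := by
  have hlim : Tendsto (fun n => (q (x n) : EReal)) atTop (nhds (q y : EReal)) :=
    (continuous_coe_real_ereal.tendsto _).comp ((hq.tendsto y).comp hx)
  calc (q y : EReal) + E y
      ≤ liminf (fun n => (q (x n) : EReal)) atTop + liminf (fun n => E (x n)) atTop := by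
        rw [hlim.liminf_eq]
        gcongr
        exact hE x y hx
    _ ≤ _ := EReal.le_liminf_add

/-- The quadratic part of the BDF2 penalization dominates `d(u*,·)²/(2τ*)` up to a constant. -/
theorem bdf2_quadratic_lower_bound {X : Type*} [MetricSpace X] {τ τs : ℝ} (hτ : 0 < τ)
    (hττs : τ < τs) (o u v w : X) :
    1 / (2 * τs) * dist o w ^ 2
        + 1 / τ * (dist v o ^ 2 - dist u o ^ 2 / 4 - (2 * dist v o + dist u o / 2) ^ 2)
      ≤ 1 / τ * dist v w ^ 2 - 1 / (4 * τ) * dist u w ^ 2 := by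
  have hinv : 1 / (2 * τs) ≤ 1 / τ * (1 / 2) := by
    rw [← one_div_mul_one_div, mul_comm]
    gcongr
  have hv : (dist o w - dist v o) ^ 2 ≤ dist v w ^ 2 := by
    refine sq_le_sq' ?_ ?_
    · linarith [dist_triangle v w o, dist_comm o w]
    · linarith [dist_triangle o v w, dist_comm o v]
  have hu : dist u w ^ 2 ≤ (dist u o + dist o w) ^ 2 :=
    pow_le_pow_left₀ dist_nonneg (dist_triangle u o w) 2
  have hquad : 1 / 2 * dist o w ^ 2
      + (dist v o ^ 2 - dist u o ^ 2 / 4 - (2 * dist v o + dist u o / 2) ^ 2)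
      ≤ dist v w ^ 2 - dist u w ^ 2 / 4 := by
    nlinarith [sq_nonneg (dist o w / 2 - (2 * dist v o + dist u o / 2))]
  have hscaled := mul_le_mul_of_nonneg_left hquad (one_div_pos.mpr hτ).le
  have hsq := mul_le_mul_of_nonneg_right hinv (sq_nonneg (dist o w))
  have hfour : 1 / (4 * τ) * dist u w ^ 2 = 1 / τ * (dist u w ^ 2 / 4) := by
    field_simp
  rw [hfour]
  nlinarith

/-- Under assumptions (E1), (E2), (E3) with `λ ≤ 0` and `(−λ)τ* ≤ 1/2`,
for every `τ ∈ (0,τ*)` and all `u, v ∈ X` the BDF2 penalization `Ψ(τ,u,v;·)` admits a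
unique minimizer, which lies in the domain of `E`. -/
theorem bdf2Psi_existsUnique_minimizer {X : Type*} [MetricSpace X] [CompleteSpace X]
    [TopologicalSpace.SeparableSpace X]
    (E : X → EReal) (hbot : ∀ w, E w ≠ ⊥) (hdom : ∃ w, E w ≠ ⊤)
    (τs lam : ℝ) (hτs : 0 < τs) (hlam : lam ≤ 0) (hlamτs : (-lam) * τs ≤ 1 / 2)
    (hE1 : ∀ (un : ℕ → X) (x : X), Tendsto un atTop (nhds x) →
      E x ≤ liminf (fun n => E (un n)) atTop)
    (ustar : X) (cstar : EReal)
    (hcstar : cstar = ⨅ v : X, (((1 / (2 * τs)) * dist ustar v ^ 2 : ℝ) : EReal) + E v)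
    (hE2 : ⊥ < cstar)
    (hE3 : ∀ τ ∈ Set.Ioo (0 : ℝ) τs, ∀ u v γ₀ γ₁ : X, E γ₀ ≠ ⊤ → E γ₁ ≠ ⊤ →
      ∃ γ : ℝ → X, ContinuousOn γ (Set.Icc 0 1) ∧ γ 0 = γ₀ ∧ γ 1 = γ₁ ∧
        ∀ s ∈ Set.Icc (0 : ℝ) 1,
          bdf2Psi E τ u v (γ s)
            ≤ ((1 - s : ℝ) : EReal) * bdf2Psi E τ u v γ₀
              + ((s : ℝ) : EReal) * bdf2Psi E τ u v γ₁
              - ((1 / 2 * (3 / (2 * τ) + lam) * s * (1 - s) * dist γ₀ γ₁ ^ 2 : ℝ) : EReal))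
    (τ : ℝ) (hτ : τ ∈ Set.Ioo 0 τs) (u v : X) :
    ∃! ws : X, E ws ≠ ⊤ ∧ ∀ w : X, bdf2Psi E τ u v ws ≤ bdf2Psi E τ u v w := by
  obtain ⟨hτ0, hττs⟩ := hτ
  have hκ : 0 < 3 / (2 * τ) + lam := by
    have h : 0 < 3 + lam * (2 * τ) := by nlinarith
    have heq : 3 / (2 * τ) + lam = (3 + lam * (2 * τ)) / (2 * τ) := by field_simp
    rw [heq]
    positivity
  have htop : ∀ w, bdf2Psi E τ u v w ≠ ⊤ ↔ E w ≠ ⊤ := by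
    intro w
    refine not_congr ⟨fun h => ?_, fun h => by rw [bdf2Psi, h, EReal.coe_add_top]⟩
    by_contra hw
    exact EReal.add_ne_top (EReal.coe_ne_top _) hw h
  obtain ⟨c, hc⟩ := EReal.lt_iff_exists_real_btwn.mp hE2
  obtain ⟨k, hquad⟩ : ∃ k : ℝ, ∀ w, 1 / (2 * τs) * dist ustar w ^ 2 + k
      ≤ 1 / τ * dist v w ^ 2 - 1 / (4 * τ) * dist u w ^ 2 :=
    ⟨_, bdf2_quadratic_lower_bound hτ0 hττs ustar u v⟩
  have hlower : ∀ w, ((c + k : ℝ) : EReal) ≤ bdf2Psi E τ u v w := by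
    intro w
    by_cases hw : E w = ⊤
    · rw [bdf2Psi, hw, EReal.coe_add_top]
      exact le_top
    · have hcw : (c : EReal) ≤ ((1 / (2 * τs) * dist ustar w ^ 2 : ℝ) : EReal) + E w :=
        hc.2.le.trans (hcstar ▸ iInf_le _ w)
      obtain ⟨e, he⟩ : ∃ e : ℝ, E w = e :=
        ⟨(E w).toReal, (EReal.coe_toReal hw (hbot w)).symm⟩
      rw [he] at hcw
      have hcw' : c ≤ 1 / (2 * τs) * dist ustar w ^ 2 + e := by exact_mod_cast hcw
      rw [bdf2Psi, he, ← EReal.coe_add, EReal.coe_le_coe_iff]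
      linarith [hquad w]
  simp only [← htop]
  refine existsUnique_minimizer_of_midpoint_convex (bdf2Psi E τ u v)
    (hdom.imp fun w => (htop w).mpr) (c + k) hlower ?_
    (1 / 8 * (3 / (2 * τ) + lam)) (by positivity) ?_
  · exact coe_add_le_liminf_of_continuous E hE1
      (fun w => 1 / τ * dist v w ^ 2 - 1 / (4 * τ) * dist u w ^ 2) (by fun_prop)
  · intro x y a b hx hy
    obtain ⟨γ, -, -, -, hγ⟩ := hE3 τ ⟨hτ0, hττs⟩ u v x y
      ((htop x).mp (by simp [hx])) ((htop y).mp (by simp [hy]))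
    refine ⟨γ (1 / 2), (hγ (1 / 2) (by norm_num)).trans ?_⟩
    rw [hx, hy, ← EReal.coe_mul, ← EReal.coe_mul, ← EReal.coe_add, ← EReal.coe_sub,
      EReal.coe_le_coe_iff]
    exact le_of_eq (by ring)
end

section
/- Let τ > 0, let u, v ∈ D(E), and let w* ∈ X be a minimizer of w ↦ Ψ(τ,u,v;w) over X. Then the one-step almost-energy-diminishing estimate holds: E(w*) + (1/(2τ))·d(v,w*)² ≤ E(v) + (1/(4τ))·d(u,v)². -/
/-- one-step almost-energy-diminishing estimate for the BDF2 variational step: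
`E(w*) + (1/(2τ))d(v,w*)² ≤ E(v) + (1/(4τ))d(u,v)²` whenever `w*` minimizes `Ψ(τ,u,v;·)`. -/
theorem bdf2_one_step_energy_diminishing {X : Type*} [MetricSpace X]
    (E : X → EReal) (hbot : ∀ w, E w ≠ ⊥)
    (τ : ℝ) (hτ : 0 < τ) (u v : X) (hu : E u ≠ ⊤) (hv : E v ≠ ⊤)
    (ws : X) (hmin : ∀ w : X, bdf2Psi E τ u v ws ≤ bdf2Psi E τ u v w) :
    E ws + ((1 / (2 * τ) * dist v ws ^ 2 : ℝ) : EReal)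
      ≤ E v + ((1 / (4 * τ) * dist u v ^ 2 : ℝ) : EReal) := by
  have hv_min := hmin v
  have hws : E ws ≠ ⊤ := by
    intro h
    lift E v to ℝ using ⟨hv, hbot v⟩ with b hb
    rw [bdf2Psi, bdf2Psi, h, ← hb, EReal.coe_add_top, ← EReal.coe_add, top_le_iff] at hv_min
    exact EReal.coe_ne_top _ hv_min
  unfold bdf2Psi at hv_min
  lift E v to ℝ using ⟨hv, hbot v⟩ with b
  lift E ws to ℝ using ⟨hws, hbot ws⟩ with a
  norm_cast at hv_min ⊢
  rw [dist_self] at hv_min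
  have hsq : dist u ws ^ 2 ≤ 2 * dist u v ^ 2 + 2 * dist v ws ^ 2 := by
    nlinarith [dist_triangle u v ws, dist_nonneg (x := u) (y := ws),
      sq_nonneg (dist u v - dist v ws)]
  have hscaled := mul_le_mul_of_nonneg_left hsq (by positivity : 0 ≤ 1 / (4 * τ))
  have h_four : 1 / (4 * τ) = 1 / τ / 4 := by field_simp
  have h_two : 1 / (2 * τ) = 1 / τ / 2 := by field_simp
  rw [h_four] at hv_min hscaled ⊢
  rw [h_two]
  linarith
end

section
/- Let τ > 0 and let u_τ^{−1}, u_τ^0 ∈ D(E). Let (u_τ^k)_{k≥1} be a discrete BDF2 solution, i.e. each u_τ^k minimizes w ↦ Ψ(τ, u_τ^{k−2}, u_τ^{k−1}; w) over X. Then for every N ≥ 1: E(u_τ^N) + (1/(4τ))·Σ_{k=1}^{N} d(u_τ^{k−1}, u_τ^k)² ≤ E(u_τ^0) + (1/(4τ))·d(u_τ^{−1}, u_τ^0)². -/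
/-- If `w` is no worse than `v` for `Ψ(τ,u,v;·)` and `E v` is finite, then `E w` is finite. -/
lemma energy_ne_top_of_bdf2Psi_le {X : Type*} [MetricSpace X] {E : X → EReal} {τ : ℝ} {u v w : X}
    (hv : E v ≠ ⊤) (h : bdf2Psi E τ u v w ≤ bdf2Psi E τ u v v) : E w ≠ ⊤ := by
  intro hw
  rw [bdf2Psi, bdf2Psi, hw, EReal.coe_add_top, top_le_iff] at h
  exact EReal.add_ne_top (EReal.coe_ne_top _) hv h

/-- One-step energy estimate for the BDF2 penalization. -/
lemma energy_le_of_bdf2Psi_le {X : Type*} [MetricSpace X] {E : X → EReal} {τ : ℝ} (hτ : 0 < τ)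
    {u v w : X} {a b : ℝ} (hv : E v = a) (hw : E w = b)
    (h : bdf2Psi E τ u v w ≤ bdf2Psi E τ u v v) :
    b + 1 / (2 * τ) * dist v w ^ 2 ≤ a + 1 / (4 * τ) * dist u v ^ 2 := by
  rw [bdf2Psi, bdf2Psi, hv, hw] at h
  norm_cast at h
  rw [dist_self] at h
  have hsq : dist u w ^ 2 ≤ 2 * (dist u v ^ 2 + dist v w ^ 2) :=
    (pow_le_pow_left₀ dist_nonneg (dist_triangle u v w) 2).trans add_sq_le
  have hmul := mul_le_mul_of_nonneg_left hsq (by positivity : 0 ≤ 1 / (4 * τ))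
  have h4 : 1 / τ = 4 * (1 / (4 * τ)) := by field_simp
  have h2 : 1 / (2 * τ) = 2 * (1 / (4 * τ)) := by field_simp; norm_num
  rw [h4] at h
  rw [h2]
  linarith

/-- Telescoping of the one-step estimates `b (n+1) + 2 c (n+1) ≤ b n + c n`. -/
lemma add_sum_range_le_of_step {b c : ℕ → ℝ} (h : ∀ n, b (n + 1) + 2 * c (n + 1) ≤ b n + c n)
    (N : ℕ) : b N + c N + ∑ k ∈ Finset.range N, c (k + 1) ≤ b 0 + c 0 := by
  induction N with
  | zero => simp
  | succ n ih =>
    rw [Finset.sum_range_succ]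
    linarith [h n]

/-- telescoped energy estimate for a discrete BDF2 solution.
Here `u k` encodes `u_τ^{k−1}`, i.e. `u 0 = u_τ^{−1}`, `u 1 = u_τ^0`, and each
`u (k+2) = u_τ^{k+1}` minimizes `w ↦ Ψ(τ, u_τ^{k−1}, u_τ^k; w)`. Then for every `N ≥ 1`,
`E(u_τ^N) + (1/(4τ))·Σ_{k=1}^{N} d(u_τ^{k−1},u_τ^k)² ≤ E(u_τ^0) + (1/(4τ))·d(u_τ^{−1},u_τ^0)²`. -/
theorem bdf2_energy_estimate {X : Type*} [MetricSpace X]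
    (E : X → EReal) (hbot : ∀ w, E w ≠ ⊥)
    (τ : ℝ) (hτ : 0 < τ) (u : ℕ → X) (h0 : E (u 0) ≠ ⊤) (h1 : E (u 1) ≠ ⊤)
    (hmin : ∀ k : ℕ, ∀ w : X,
      bdf2Psi E τ (u k) (u (k + 1)) (u (k + 2)) ≤ bdf2Psi E τ (u k) (u (k + 1)) w)
    (N : ℕ) (hN : 1 ≤ N) :
    E (u (N + 1))
        + ((1 / (4 * τ) * ∑ k ∈ Finset.range N, dist (u (k + 1)) (u (k + 2)) ^ 2 : ℝ) : EReal)
      ≤ E (u 1) + ((1 / (4 * τ) * dist (u 0) (u 1) ^ 2 : ℝ) : EReal) := by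
  have hfin : ∀ k, E (u (k + 1)) ≠ ⊤ := by
    intro k
    induction k with
    | zero => exact h1
    | succ k ih => exact energy_ne_top_of_bdf2Psi_le ih (hmin k _)
  have hE : ∀ k, E (u (k + 1)) = ((E (u (k + 1))).toReal : EReal) := fun k =>
    (EReal.coe_toReal (hfin k) (hbot _)).symm
  have hstep : ∀ n, (E (u (n + 1 + 1))).toReal
      + 2 * (1 / (4 * τ) * dist (u (n + 1)) (u (n + 1 + 1)) ^ 2)
      ≤ (E (u (n + 1))).toReal + 1 / (4 * τ) * dist (u n) (u (n + 1)) ^ 2 := by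
    intro n
    have h := energy_le_of_bdf2Psi_le hτ (hE n) (hE (n + 1)) (hmin n _)
    have h2 : 1 / (2 * τ) = 2 * (1 / (4 * τ)) := by field_simp; norm_num
    rwa [h2, mul_assoc] at h
  have hsum := add_sum_range_le_of_step (b := fun n => (E (u (n + 1))).toReal)
    (c := fun n => 1 / (4 * τ) * dist (u n) (u (n + 1)) ^ 2) hstep N
  have hpos : 0 ≤ 1 / (4 * τ) * dist (u N) (u (N + 1)) ^ 2 := by positivity
  rw [hE N, show E (u 1) = _ from hE 0, ← EReal.coe_add, ← EReal.coe_add, EReal.coe_le_coe_iff,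
    Finset.mul_sum]
  simp only [zero_add] at hsum ⊢
  linarith
end

section
/- Assume (E1), (E2) and (E3) with λ ≤ 0 and (−λ)·τ* ≤ 1/2, fix u⁰ ∈ X, a time horizon T > 0, and constants K₀, K₁, K₂ ≥ 0. Then there exists a constant C, depending only on K₀, K₁, K₂, T, τ*, c*, and the fixed points u*, u⁰, such that the following holds: for every τ ∈ (0, τ*) and every choice of initial data u_τ^{−1}, u_τ^0 ∈ X satisfying (I0) d(u_τ^0, u⁰) ≤ K₀τ, (I1) E(u_τ^0) ≤ K₁ and E(u_τ^{−1}) ≤ K₁, (I2) d(u_τ^{−1}, u_τ^0) ≤ K₂τ, the corresponding discrete BDF2 solution (u_τ^k)_{k≥1} satisfies, for every N ∈ ℕ with Nτ ≤ T: (i) Σ_{k=1}^{N} (1/(2τ))·d(u_τ^{k−1}, u_τ^k)² ≤ C; (ii) |E(u_τ^N)| ≤ C; (iii) d(u*, u_τ^N)² ≤ C. -/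
open Filter

/-- Discrete Grönwall inequality in summed form. -/
theorem discrete_gronwall_sum {x : ℕ → ℝ} {B c : ℝ} (hc : 0 ≤ c)
    (n : ℕ) (h : ∀ m ≤ n, x m ≤ B + c * ∑ k ∈ Finset.range m, x k) :
    B + c * ∑ k ∈ Finset.range n, x k ≤ B * (1 + c) ^ n := by
  induction n with
  | zero => simp
  | succ n ih =>
    have h₁ := ih fun m hm => h m (by omega)
    have h₂ := mul_le_mul_of_nonneg_left (h n (by omega)) hc
    have h₃ := mul_le_mul_of_nonneg_right h₁ (by linarith : 0 ≤ 1 + c)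
    rw [Finset.sum_range_succ, pow_succ]
    linarith

/-- Discrete Grönwall inequality with an exponential bound. -/
theorem discrete_gronwall_exp {x : ℕ → ℝ} {B c : ℝ} (hB : 0 ≤ B) (hc : 0 ≤ c)
    (n : ℕ) (h : ∀ m ≤ n, x m ≤ B + c * ∑ k ∈ Finset.range m, x k) :
    x n ≤ B * Real.exp (n * c) := by
  refine ((h n le_rfl).trans (discrete_gronwall_sum hc n h)).trans ?_
  refine mul_le_mul_of_nonneg_left ?_ hB
  rw [Real.exp_nat_mul]
  exact pow_le_pow_left₀ (by linarith) (by linarith [Real.add_one_le_exp c]) n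

/-- One-step energy estimate for a BDF2 minimizer: the modified energy
`E + d²/(4τ)` decreases, with a dissipation gained from convexity along a curve. -/
theorem bdf2_energy_step {X : Type*} [MetricSpace X] {E : X → EReal} {τ lam : ℝ}
    (hτ : 0 < τ) (hlam : (-lam) * τ ≤ 1 / 2) {u v w γ : X} {ev ew : ℝ}
    (hv : E v = ev) (hw : E w = ew)
    (hmin : bdf2Psi E τ u v w ≤ bdf2Psi E τ u v γ)
    (hconv : bdf2Psi E τ u v γ
      ≤ ((1 - 1 / 4 : ℝ) : EReal) * bdf2Psi E τ u v w
        + ((1 / 4 : ℝ) : EReal) * bdf2Psi E τ u v v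
        - ((1 / 2 * (3 / (2 * τ) + lam) * (1 / 4) * (1 - 1 / 4) * dist w v ^ 2 : ℝ) : EReal)) :
    5 / (8 * τ) * dist v w ^ 2 + (ew + 1 / (4 * τ) * dist v w ^ 2)
      ≤ ev + 1 / (4 * τ) * dist u v ^ 2 := by
  have h := hmin.trans hconv
  simp only [bdf2Psi, hv, hw] at h
  norm_cast at h
  rw [dist_self, dist_comm w v] at h
  have htri : dist u w ^ 2 ≤ 2 * dist u v ^ 2 + 2 * dist v w ^ 2 := by
    have := pow_le_pow_left₀ dist_nonneg (dist_triangle u v w) 2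
    nlinarith [sq_nonneg (dist u v - dist v w)]
  have hl : -(1 / (2 * τ)) ≤ lam := by
    rw [neg_le, le_div_iff₀ (by positivity)]
    linarith
  obtain ⟨r, hr⟩ : ∃ r, r = 1 / τ := ⟨_, rfl⟩
  have hr0 : 0 < r := by rw [hr]; positivity
  have e₁ : 1 / (4 * τ) = r / 4 := by rw [hr]; field_simp
  have e₂ : 3 / (2 * τ) = 3 * r / 2 := by rw [hr]; field_simp
  have e₃ : 1 / (2 * τ) = r / 2 := by rw [hr]; field_simp
  have e₄ : 5 / (8 * τ) = 5 * r / 8 := by rw [hr]; field_simp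
  rw [e₁, e₂, ← hr] at h
  rw [e₃] at hl
  rw [e₁, e₄]
  have h₁ := mul_le_mul_of_nonneg_left htri hr0.le
  have h₂ := mul_le_mul_of_nonneg_right hl (sq_nonneg (dist v w))
  linarith

/-- Along a BDF2 sequence starting from finite energy, every term has finite energy. -/
theorem bdf2_energy_ne_top {X : Type*} [MetricSpace X] {E : X → EReal} {τ : ℝ} {u : ℕ → X}
    (hmin : ∀ k : ℕ, ∀ w : X,
      bdf2Psi E τ (u k) (u (k + 1)) (u (k + 2)) ≤ bdf2Psi E τ (u k) (u (k + 1)) w)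
    (h1 : E (u 1) ≠ ⊤) (k : ℕ) : E (u (k + 1)) ≠ ⊤ := by
  induction k with
  | zero => exact h1
  | succ k ih =>
    intro htop
    have h := hmin k (u (k + 1))
    rw [bdf2Psi, htop, EReal.coe_add_top, top_le_iff, bdf2Psi] at h
    exact EReal.add_ne_top (EReal.coe_ne_top _) ih h

/-- Growth of squared distances along a sequence, with a weight `θ` in Young's inequality. -/
theorem dist_sq_le_sum {X : Type*} [PseudoMetricSpace X] (p : X) (u : ℕ → X) {θ : ℝ}
    (hθ : 0 < θ) (n : ℕ) :
    dist p (u n) ^ 2 ≤ dist p (u 0) ^ 2 + θ * ∑ k ∈ Finset.range n, dist p (u k) ^ 2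
      + (1 + 1 / θ) * ∑ k ∈ Finset.range n, dist (u k) (u (k + 1)) ^ 2 := by
  induction n with
  | zero => simp
  | succ n ih =>
    rw [Finset.sum_range_succ, Finset.sum_range_succ]
    have h := pow_le_pow_left₀ dist_nonneg (dist_triangle p (u n) (u (n + 1))) 2
    have hy : 2 * dist p (u n) * dist (u n) (u (n + 1))
        ≤ θ * dist p (u n) ^ 2 + 1 / θ * dist (u n) (u (n + 1)) ^ 2 := by
      have h0 : 0 ≤ 1 / θ * (θ * dist p (u n) - dist (u n) (u (n + 1))) ^ 2 := by positivity
      have h1 : 1 / θ * (θ * dist p (u n) - dist (u n) (u (n + 1))) ^ 2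
          = θ * dist p (u n) ^ 2 - 2 * dist p (u n) * dist (u n) (u (n + 1))
            + 1 / θ * dist (u n) (u (n + 1)) ^ 2 := by
        field_simp
        ring
      linarith
    linarith

/-- Grönwall-type bound on the distances to `p` when the quadratic increments are controlled by
the time step and by the distance itself. -/
theorem dist_sq_le_exp_of_sum_sq_le {X : Type*} [PseudoMetricSpace X] (p : X) (u : ℕ → X)
    {τ τs A : ℝ} (hτ : 0 < τ) (hττs : τ < τs) (hA : 0 ≤ A)
    (hsum : ∀ n, 5 / (8 * τ) * ∑ k ∈ Finset.range n, dist (u k) (u (k + 1)) ^ 2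
      ≤ A + 1 / (2 * τs) * dist p (u n) ^ 2) (n : ℕ) :
    dist p (u n) ^ 2
      ≤ (10 * dist p (u 0) ^ 2 + 18 * τs * A) * Real.exp (n * (80 * τ / τs)) := by
  have hτs : 0 < τs := hτ.trans hττs
  refine discrete_gronwall_exp (x := fun n => dist p (u n) ^ 2) (by positivity) (by positivity) n
    fun m _ => ?_
  have h := dist_sq_le_sum p u (θ := 8 * τ / τs) (by positivity) m
  have hs := hsum m
  set S := ∑ k ∈ Finset.range m, dist (u k) (u (k + 1)) ^ 2
  set D := ∑ k ∈ Finset.range m, dist p (u k) ^ 2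
  set x := dist p (u m) ^ 2 with hx
  have hx0 : 0 ≤ x := sq_nonneg _
  have hfac : (1 + 1 / (8 * τ / τs)) * S = (8 / 5 * τ + τs / 5) * (5 / (8 * τ) * S) := by
    field_simp
  have hR : 0 ≤ A + 1 / (2 * τs) * x := by positivity
  have h₁ : (1 + 1 / (8 * τ / τs)) * S ≤ 9 / 5 * τs * (A + 1 / (2 * τs) * x) := by
    rw [hfac]
    refine (mul_le_mul_of_nonneg_left hs (by positivity)).trans ?_
    exact mul_le_mul_of_nonneg_right (by linarith) hR
  have h₂ : 9 / 5 * τs * (A + 1 / (2 * τs) * x) = 9 / 5 * τs * A + 9 / 10 * x := by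
    field_simp
    ring
  have h₃ : 80 * τ / τs * D = 10 * (8 * τ / τs * D) := by ring
  rw [h₃]
  linarith

/-- classical estimates for discrete BDF2 solutions.
In a discrete solution `u : ℕ → X`, the index is shifted by one: `u 0 = u_τ^{−1}`,
`u 1 = u_τ^0`, and `u (k+2) = u_τ^{k+1}` minimizes `w ↦ Ψ(τ, u_τ^{k−1}, u_τ^k; w)`.
Under (E1)–(E3) and (I0)–(I2) there is a constant `C` (depending only on the fixed data)
such that for all `N` with `Nτ ≤ T`:
(i) `Σ_{k=1}^N (1/(2τ))·d(u_τ^{k−1},u_τ^k)² ≤ C`, (ii) `|E(u_τ^N)| ≤ C`,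
(iii) `d(u*,u_τ^N)² ≤ C`. -/
theorem bdf2_classical_estimates {X : Type*} [MetricSpace X] [CompleteSpace X]
    [TopologicalSpace.SeparableSpace X]
    (E : X → EReal) (hbot : ∀ w, E w ≠ ⊥) (hdom : ∃ w, E w ≠ ⊤)
    (τs lam : ℝ) (hτs : 0 < τs) (hlam : lam ≤ 0) (hlamτs : (-lam) * τs ≤ 1 / 2)
    (hE1 : ∀ (un : ℕ → X) (x : X), Tendsto un atTop (nhds x) →
      E x ≤ liminf (fun n => E (un n)) atTop)
    (ustar : X) (cstar : EReal)
    (hcstar : cstar = ⨅ v : X, (((1 / (2 * τs)) * dist ustar v ^ 2 : ℝ) : EReal) + E v)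
    (hE2 : ⊥ < cstar)
    (hE3 : ∀ τ ∈ Set.Ioo (0 : ℝ) τs, ∀ u v γ₀ γ₁ : X, E γ₀ ≠ ⊤ → E γ₁ ≠ ⊤ →
      ∃ γ : ℝ → X, ContinuousOn γ (Set.Icc 0 1) ∧ γ 0 = γ₀ ∧ γ 1 = γ₁ ∧
        ∀ s ∈ Set.Icc (0 : ℝ) 1,
          bdf2Psi E τ u v (γ s)
            ≤ ((1 - s : ℝ) : EReal) * bdf2Psi E τ u v γ₀
              + ((s : ℝ) : EReal) * bdf2Psi E τ u v γ₁
              - ((1 / 2 * (3 / (2 * τ) + lam) * s * (1 - s) * dist γ₀ γ₁ ^ 2 : ℝ) : EReal))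
    (u0pt : X) (T : ℝ) (hT : 0 < T)
    (K₀ K₁ K₂ : ℝ) (hK₀ : 0 ≤ K₀) (hK₁ : 0 ≤ K₁) (hK₂ : 0 ≤ K₂) :
    ∃ C : ℝ, ∀ τ ∈ Set.Ioo (0 : ℝ) τs, ∀ u : ℕ → X,
      (∀ k : ℕ, ∀ w : X,
        bdf2Psi E τ (u k) (u (k + 1)) (u (k + 2)) ≤ bdf2Psi E τ (u k) (u (k + 1)) w) →
      dist (u 1) u0pt ≤ K₀ * τ →
      E (u 1) ≤ (K₁ : EReal) → E (u 0) ≤ (K₁ : EReal) →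
      dist (u 0) (u 1) ≤ K₂ * τ →
      ∀ N : ℕ, (N : ℝ) * τ ≤ T →
        (∑ k ∈ Finset.range N, (1 / (2 * τ)) * dist (u (k + 1)) (u (k + 2)) ^ 2 ≤ C)
        ∧ (((-C : ℝ) : EReal) ≤ E (u (N + 1)) ∧ E (u (N + 1)) ≤ ((C : ℝ) : EReal))
        ∧ dist ustar (u (N + 1)) ^ 2 ≤ C := by
  obtain ⟨w₀, hw₀⟩ := hdom
  have hle : ∀ v, cstar ≤ (((1 / (2 * τs)) * dist ustar v ^ 2 : ℝ) : EReal) + E v := fun v => by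
    rw [hcstar]
    exact iInf_le _ v
  have hctop : cstar ≠ ⊤ := fun h => by
    have := hle w₀
    rw [h, top_le_iff] at this
    exact EReal.add_ne_top (EReal.coe_ne_top _) hw₀ this
  lift cstar to ℝ using ⟨hctop, hE2.ne'⟩ with c
  obtain ⟨A, hA⟩ : ∃ A, A = K₁ + K₂ ^ 2 * τs / 4 + |c| := ⟨_, rfl⟩
  obtain ⟨R, hR⟩ : ∃ R, R = dist ustar u0pt + K₀ * τs := ⟨_, rfl⟩
  obtain ⟨M, hM⟩ : ∃ M, M = (10 * R ^ 2 + 18 * τs * A) * Real.exp (80 * T / τs) := ⟨_, rfl⟩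
  have hA0 : 0 ≤ A := by rw [hA]; positivity
  have hM0 : 0 ≤ M := by rw [hM]; positivity
  refine ⟨M + A + 1 / (2 * τs) * M, ?_⟩
  rintro τ ⟨hτ, hττs⟩ u hmin hI0 hI1 - hI2 N hN
  have hfin : ∀ k, E (u (k + 1)) ≠ ⊤ :=
    bdf2_energy_ne_top hmin (hI1.trans_lt (EReal.coe_lt_top _)).ne
  obtain ⟨e, he⟩ : ∃ e : ℕ → ℝ, ∀ k, E (u (k + 1)) = e k :=
    ⟨fun k => (E (u (k + 1))).toReal, fun k => (EReal.coe_toReal (hfin k) (hbot _)).symm⟩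
  have hlower : ∀ k, c ≤ 1 / (2 * τs) * dist ustar (u (k + 1)) ^ 2 + e k := fun k => by
    have h := hle (u (k + 1))
    rw [he k] at h
    exact_mod_cast h
  have hstep : ∀ k, 5 / (8 * τ) * dist (u (k + 1)) (u (k + 2)) ^ 2
      + (e (k + 1) + 1 / (4 * τ) * dist (u (k + 1)) (u (k + 2)) ^ 2)
      ≤ e k + 1 / (4 * τ) * dist (u k) (u (k + 1)) ^ 2 := fun k => by
    obtain ⟨γ, -, -, -, hγ⟩ := hE3 τ ⟨hτ, hττs⟩ (u k) (u (k + 1)) (u (k + 2)) (u (k + 1))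
      (hfin (k + 1)) (hfin k)
    exact bdf2_energy_step hτ
      ((mul_le_mul_of_nonneg_left hττs.le (neg_nonneg.2 hlam)).trans hlamτs)
      (he k) (he (k + 1)) (hmin k _) (hγ (1 / 4) ⟨by norm_num, by norm_num⟩)
  have hinit : e 0 + 1 / (4 * τ) * dist (u 0) (u 1) ^ 2 ≤ K₁ + K₂ ^ 2 * τs / 4 := by
    have h₀ : e 0 ≤ K₁ := by
      have h := hI1
      rw [he 0] at h
      exact_mod_cast h
    have h₁ : 1 / (4 * τ) * dist (u 0) (u 1) ^ 2 ≤ 1 / (4 * τ) * (K₂ * τ) ^ 2 := by gcongr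
    have h₂ : 1 / (4 * τ) * (K₂ * τ) ^ 2 = K₂ ^ 2 * τ / 4 := by field_simp
    have h₃ : K₂ ^ 2 * τ ≤ K₂ ^ 2 * τs := by gcongr
    linarith
  have henergy : ∀ n, 5 / (8 * τ) * ∑ k ∈ Finset.range n, dist (u (k + 1)) (u (k + 2)) ^ 2
      + (e n + 1 / (4 * τ) * dist (u n) (u (n + 1)) ^ 2) ≤ K₁ + K₂ ^ 2 * τs / 4 := fun n => by
    induction n with
    | zero => simpa using hinit
    | succ n ih =>
      rw [Finset.sum_range_succ]
      linarith [hstep n]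
  have hpos : ∀ n, 0 ≤ 1 / (4 * τ) * dist (u n) (u (n + 1)) ^ 2 := fun n => by positivity
  have hsum : ∀ n, 5 / (8 * τ) * ∑ k ∈ Finset.range n, dist (u (k + 1)) (u (k + 2)) ^ 2
      ≤ A + 1 / (2 * τs) * dist ustar (u (n + 1)) ^ 2 := fun n => by
    linarith [henergy n, hpos n, hlower n, neg_abs_le c]
  have hdist : dist ustar (u (N + 1)) ^ 2 ≤ M := by
    refine (dist_sq_le_exp_of_sum_sq_le ustar (fun k => u (k + 1)) hτ hττs hA0 hsum N).trans ?_
    have h₀ : dist ustar (u 1) ≤ R := by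
      have := dist_triangle_right ustar (u 1) u0pt
      have h' : K₀ * τ ≤ K₀ * τs := by gcongr
      linarith
    have h₁ : (N : ℝ) * (80 * τ / τs) ≤ 80 * T / τs := by
      rw [← mul_div_assoc]
      gcongr ?_ / τs
      linarith
    rw [hM]
    gcongr
  have hdist' : 1 / (2 * τs) * dist ustar (u (N + 1)) ^ 2 ≤ 1 / (2 * τs) * M := by gcongr
  have hM0' : 0 ≤ 1 / (2 * τs) * M := by positivity
  have hS0 : 0 ≤ 1 / (8 * τ) * ∑ k ∈ Finset.range N, dist (u (k + 1)) (u (k + 2)) ^ 2 := by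
    positivity
  have h₅ : 5 / (8 * τ) = 5 * (1 / (8 * τ)) := by ring
  have h₄ : 1 / (2 * τ) = 4 * (1 / (8 * τ)) := by field_simp; norm_num
  have hc := neg_abs_le c
  have hK : 0 ≤ K₂ ^ 2 * τs / 4 := by positivity
  refine ⟨?_, ?_, by linarith⟩
  · rw [← Finset.mul_sum]
    have h := hsum N
    rw [h₅] at h
    rw [h₄]
    linarith
  · have h := henergy N
    rw [h₅] at h
    rw [he N, EReal.coe_le_coe_iff, EReal.coe_le_coe_iff]
    constructor
    · linarith [hlower N]
    · linarith [hpos N, abs_nonneg c]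
end

section
/- Assume (E3) with λ ≤ 0 and (−λ)·τ* ≤ 1/2. Let τ ∈ (0, τ*), let u, v ∈ D(E), and let w* ∈ D(E) be a minimizer of w ↦ Ψ(τ,u,v;w) over X. Then the discrete evolution variational inequality holds: for every w ∈ D(E), (3/(4τ) + λ/2)·d(w*,w)² − (1/τ)·d(v,w)² + (1/(4τ))·d(u,w)² ≤ E(w) − E(w*) − (1/τ)·d(v,w*)² + (1/(4τ))·d(u,w*)². -/
/-- If a real `a` lies below the uniformly convex upper bound
`(1 - s) a + s b - c s (1 - s)` for all `s ∈ (0, 1)`, then `c ≤ b - a`. -/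
theorem le_sub_of_forall_le_convex_combination {a b c : ℝ}
    (h : ∀ s ∈ Set.Ioo (0 : ℝ) 1, a ≤ (1 - s) * a + s * b - c * s * (1 - s)) :
    c ≤ b - a := by
  have hlim : Filter.Tendsto (fun s : ℝ => c * (1 - s)) (nhdsWithin 0 (Set.Ioi 0)) (nhds c) := by
    have hcont : Continuous fun s : ℝ => c * (1 - s) := by fun_prop
    simpa using (hcont.tendsto 0).mono_left nhdsWithin_le_nhds
  refine le_of_tendsto hlim ?_
  filter_upwards [Ioo_mem_nhdsGT (zero_lt_one' ℝ)] with s hs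
  have hs' : s * (c * (1 - s)) ≤ s * (b - a) := by linarith [h s hs]
  exact le_of_mul_le_mul_left hs' hs.1

/-- the discrete evolution variational inequality satisfied by one
variational BDF2 step, under assumption (E3). -/
theorem bdf2_discrete_EVI {X : Type*} [MetricSpace X] [CompleteSpace X]
    [TopologicalSpace.SeparableSpace X]
    (E : X → EReal) (hbot : ∀ w, E w ≠ ⊥)
    (τs lam : ℝ) (hτs : 0 < τs) (hlam : lam ≤ 0) (hlamτs : (-lam) * τs ≤ 1 / 2)
    (hE3 : ∀ τ ∈ Set.Ioo (0 : ℝ) τs, ∀ u v γ₀ γ₁ : X, E γ₀ ≠ ⊤ → E γ₁ ≠ ⊤ →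
      ∃ γ : ℝ → X, ContinuousOn γ (Set.Icc 0 1) ∧ γ 0 = γ₀ ∧ γ 1 = γ₁ ∧
        ∀ s ∈ Set.Icc (0 : ℝ) 1,
          bdf2Psi E τ u v (γ s)
            ≤ ((1 - s : ℝ) : EReal) * bdf2Psi E τ u v γ₀
              + ((s : ℝ) : EReal) * bdf2Psi E τ u v γ₁
              - ((1 / 2 * (3 / (2 * τ) + lam) * s * (1 - s) * dist γ₀ γ₁ ^ 2 : ℝ) : EReal))
    (τ : ℝ) (hτ : τ ∈ Set.Ioo 0 τs) (u v : X) (hu : E u ≠ ⊤) (hv : E v ≠ ⊤)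
    (ws : X) (hws : E ws ≠ ⊤)
    (hmin : ∀ w : X, bdf2Psi E τ u v ws ≤ bdf2Psi E τ u v w)
    (w : X) (hw : E w ≠ ⊤) :
    (((3 / (4 * τ) + lam / 2) * dist ws w ^ 2 - (1 / τ) * dist v w ^ 2
        + (1 / (4 * τ)) * dist u w ^ 2 : ℝ) : EReal)
      ≤ E w - E ws
        + ((-(1 / τ) * dist v ws ^ 2 + (1 / (4 * τ)) * dist u ws ^ 2 : ℝ) : EReal) := by
  obtain ⟨γ, -, -, -, hγ⟩ := hE3 τ hτ u v ws w hws hw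
  have hconv := fun s hs => (hmin (γ s)).trans (hγ s hs)
  simp only [bdf2Psi] at hconv
  lift E w to ℝ using ⟨hw, hbot w⟩ with e
  lift E ws to ℝ using ⟨hws, hbot ws⟩ with es
  norm_cast at hconv ⊢
  have hgap := le_sub_of_forall_le_convex_combination
    (b := 1 / τ * dist v w ^ 2 - 1 / (4 * τ) * dist u w ^ 2 + e)
    (c := 1 / 2 * (3 / (2 * τ) + lam) * dist ws w ^ 2) fun s hs =>
      (hconv s (Set.Ioo_subset_Icc_self hs)).trans_eq (by ring)
  have hcoef : 1 / 2 * (3 / (2 * τ) + lam) = 3 / (4 * τ) + lam / 2 := by ring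
  rw [hcoef] at hgap
  linarith
end

section
/- (Main convergence theorem, part 2: the limit is an EVI gradient flow.) Under the hypotheses and notation of the main convergence theorem (assumptions (E1)–(E3) with λ ≤ 0, (−λ)·τ* ≤ 1/2; step sizes τₙ ↓ 0 strictly decreasing with τₙ/τ_{n+1} ∈ ℕ; initial data satisfying (I0)–(I2) with n-independent constants and d(u_{τₙ}^0, u⁰) ≤ K₃τₙ), the locally uniform limit u_* of the piecewise constant interpolations ū_{τₙ} satisfies: (i) u_* ∈ AC²([0,∞), X), i.e. there exists a locally square-integrable function m : [0,∞) → ℝ with d(u_*(s), u_*(t)) ≤ ∫_s^t m(r) dr for all 0 ≤ s ≤ t; and (ii) u_* satisfies the integrated evolution variational inequality: for all 0 ≤ s ≤ t and all w ∈ D(E), (1/2)·d(u_*(t), w)² − (1/2)·d(u_*(s), w)² ≤ ∫_s^t [E(w) − E(u_*(r)) − (λ/2)·d(u_*(r), w)²] dr. -/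
open Filter MeasureTheory

/-- Piecewise constant interpolation of a (index-shifted) discrete solution `u : ℕ → X`,
where `u (k+1)` encodes `u_τ^k`. -/
noncomputable def bdf2Interp {X : Type*} (u : ℕ → X) (τ t : ℝ) : X :=
  u (⌈t / τ⌉₊ + 1)

section BdfTwoConvergence

open Set Topology

section SpeedBound

variable {Y : Type*} [PseudoMetricSpace Y] {f : ℝ → Y} {V : ℝ → ℝ} {a b : ℝ}

/-- The increments of a monotone function over finitely many disjoint intervals add up to at most
its total increment. -/
lemma MonotoneOn.sum_dist_le_of_mem_disjWithin (hab : a ≤ b) (hV : MonotoneOn V (Icc a b))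
    {I : ℕ × (ℕ → ℝ × ℝ)} (hI : I ∈ AbsolutelyContinuousOnInterval.disjWithin a b) :
    ∑ i ∈ Finset.range I.1, dist (V (I.2 i).1) (V (I.2 i).2) ≤ V b - V a := by
  obtain ⟨hmem, hdisj⟩ := hI
  rw [uIcc_of_le hab] at hmem
  have hVab : V a ≤ V b := hV ⟨le_rfl, hab⟩ ⟨hab, le_rfl⟩ hab
  have hdisj' : Set.PairwiseDisjoint (Finset.range I.1 : Set ℕ)
      (fun i ↦ uIoc (V (I.2 i).1) (V (I.2 i).2)) := by
    intro i hi j hj hij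
    have hd := hdisj hi hj hij
    have mi := hmem i (by simpa using hi)
    have mj := hmem j (by simpa using hj)
    simp only [Function.onFun] at hd ⊢
    rw [Set.disjoint_left] at hd ⊢
    intro y hyi hyj
    simp only [uIoc, mem_Ioc] at hyi hyj hd
    have key : ∀ p q r s : ℝ, p ∈ Icc a b → q ∈ Icc a b → r ∈ Icc a b → s ∈ Icc a b →
        min (V p) (V q) < y → y ≤ max (V r) (V s) → min p q < max r s := by
      intro p q r s hp hq hr hs h1 h2
      by_contra hcon
      simp only [not_lt, max_le_iff, le_min_iff] at hcon
      have h3 : max (V r) (V s) ≤ min (V p) (V q) :=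
        le_min (max_le (hV hr hp hcon.1.1) (hV hs hp hcon.1.2))
          (max_le (hV hr hq hcon.2.1) (hV hs hq hcon.2.2))
      linarith
    have h1 := key _ _ _ _ mi.1 mi.2 mi.1 mi.2 hyi.1 hyi.2
    have h2 := key _ _ _ _ mj.1 mj.2 mj.1 mj.2 hyj.1 hyj.2
    have h3 := key _ _ _ _ mi.1 mi.2 mj.1 mj.2 hyi.1 hyj.2
    have h4 := key _ _ _ _ mj.1 mj.2 mi.1 mi.2 hyj.1 hyi.2
    have h5 := @hd (min (max (I.2 i).1 (I.2 i).2) (max (I.2 j).1 (I.2 j).2))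
      ⟨lt_min h1 h3, min_le_left _ _⟩
    exact h5 ⟨lt_min h4 h2, min_le_right _ _⟩
  have hsub : (⋃ i ∈ Finset.range I.1, uIoc (V (I.2 i).1) (V (I.2 i).2)) ⊆ Ioc (V a) (V b) := by
    refine iUnion₂_subset fun i hi => ?_
    have mi := hmem i hi
    refine Ioc_subset_Ioc (le_min ?_ ?_) (max_le ?_ ?_)
    exacts [hV ⟨le_rfl, hab⟩ mi.1 mi.1.1, hV ⟨le_rfl, hab⟩ mi.2 mi.2.1,
      hV mi.1 ⟨hab, le_rfl⟩ mi.1.2, hV mi.2 ⟨hab, le_rfl⟩ mi.2.2]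
  have hm := measure_mono (μ := volume) hsub
  rw [measure_biUnion_finset hdisj' (fun _ _ => measurableSet_uIoc)] at hm
  simp only [uIoc, Real.volume_Ioc, max_sub_min_eq_abs] at hm
  rw [← ENNReal.ofReal_sum_of_nonneg (fun _ _ => abs_nonneg _),
    ENNReal.ofReal_le_ofReal_iff (by linarith)] at hm
  simpa only [Real.dist_eq, abs_sub_comm] using hm

lemma absolutelyContinuousOnInterval_of_sq_dist_le (hab : a ≤ b) (hV : MonotoneOn V (Icc a b))
    (hf : ∀ s t, a ≤ s → s ≤ t → t ≤ b → dist (f s) (f t) ^ 2 ≤ (t - s) * (V t - V s)) :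
    AbsolutelyContinuousOnInterval f a b := by
  rw [absolutelyContinuousOnInterval_iff]
  intro ε hε
  have hVab : V a ≤ V b := hV ⟨le_rfl, hab⟩ ⟨hab, le_rfl⟩ hab
  set M := V b - V a
  have hM0 : 0 ≤ M := by linarith
  obtain ⟨η, hη, hηM⟩ : ∃ η > 0, η * (M + 1) = ε :=
    ⟨ε / (M + 1), by positivity, by field_simp⟩
  refine ⟨ε * η, by positivity, fun I hI hlen => ?_⟩
  have hsum := hV.sum_dist_le_of_mem_disjWithin hab hI
  obtain ⟨hmem, -⟩ := hI
  rw [uIcc_of_le hab] at hmem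
  have hpt : ∀ x ∈ Icc a b, ∀ y ∈ Icc a b,
      dist (f x) (f y) ≤ 1 / (2 * η) * dist x y + η / 2 * dist (V x) (V y) := by
    have hord : ∀ x ∈ Icc a b, ∀ y ∈ Icc a b, x ≤ y →
        dist (f x) (f y) ≤ 1 / (2 * η) * dist x y + η / 2 * dist (V x) (V y) := by
      intro x hx y hy hxy
      have h1 := hf x y hx.1 hxy hy.2
      have h2 := hV hx hy hxy
      rw [dist_comm x y, dist_comm (V x), Real.dist_eq, Real.dist_eq, abs_of_nonneg (by linarith),
        abs_of_nonneg (by linarith)]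
      have h3 : 0 ≤ 1 / (2 * η) * (y - x) + η / 2 * (V y - V x) := by
        have := sub_nonneg.2 hxy
        have := sub_nonneg.2 h2
        positivity
      refine abs_le_of_sq_le_sq' (h1.trans ?_) h3 |>.2
      have : (1 / (2 * η) * (y - x) + η / 2 * (V y - V x)) ^ 2 - (y - x) * (V y - V x)
          = (1 / (2 * η) * (y - x) - η / 2 * (V y - V x)) ^ 2 := by
        field_simp; ring
      nlinarith [sq_nonneg (1 / (2 * η) * (y - x) - η / 2 * (V y - V x))]
    intro x hx y hy
    rcases le_total x y with h | h
    · exact hord x hx y hy h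
    · rw [dist_comm (f x), dist_comm x, dist_comm (V x)]
      exact hord y hy x hx h
  calc _ ≤ ∑ i ∈ Finset.range I.1, (1 / (2 * η) * dist (I.2 i).1 (I.2 i).2
        + η / 2 * dist (V (I.2 i).1) (V (I.2 i).2)) :=
        Finset.sum_le_sum fun i hi => hpt _ (hmem i hi).1 _ (hmem i hi).2
    _ = 1 / (2 * η) * ∑ i ∈ Finset.range I.1, dist (I.2 i).1 (I.2 i).2
        + η / 2 * ∑ i ∈ Finset.range I.1, dist (V (I.2 i).1) (V (I.2 i).2) := by
        rw [Finset.sum_add_distrib, Finset.mul_sum, Finset.mul_sum]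
    _ ≤ 1 / (2 * η) * (ε * η) + η / 2 * M := by gcongr
    _ < ε := by
        have : 1 / (2 * η) * (ε * η) = ε / 2 := by field_simp
        nlinarith

lemma sq_deriv_le_deriv {φ : ℝ → ℝ} {x : ℝ} (hφ : DifferentiableAt ℝ φ x)
    (hVx : DifferentiableAt ℝ V x)
    (h : ∀ᶠ y in 𝓝[>] x, (φ y - φ x) ^ 2 ≤ (y - x) * (V y - V x)) :
    deriv φ x ^ 2 ≤ deriv V x := by
  have h1 := hasDerivWithinAt_iff_tendsto_slope.1 (hφ.hasDerivAt.hasDerivWithinAt (s := Ioi x))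
  have h2 := hasDerivWithinAt_iff_tendsto_slope.1 (hVx.hasDerivAt.hasDerivWithinAt (s := Ioi x))
  rw [sdiff_singleton_eq_self (by simp)] at h1 h2
  refine le_of_tendsto_of_tendsto (h1.pow 2) h2 ?_
  filter_upwards [h, self_mem_nhdsWithin] with y hy hxy
  have hpos : 0 < y - x := sub_pos.2 hxy
  simp only [slope_def_field]
  rw [div_pow, div_le_div_iff₀ (by positivity) hpos]
  nlinarith

/-- A curve whose squared increments are controlled by `(t - s) * (V t - V s)` for a monotone `V`
has a locally square-integrable speed bound, namely `√V'`. -/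
theorem exists_sq_integrable_speed {u : ℝ → Y} (hV : MonotoneOn V (Ici 0))
    (hu : ∀ s t, 0 ≤ s → s ≤ t → dist (u s) (u t) ^ 2 ≤ (t - s) * (V t - V s)) :
    ∃ m : ℝ → ℝ,
      (∀ T : ℝ, 0 < T → IntegrableOn (fun r => m r ^ 2) (Icc 0 T) volume)
      ∧ ∀ s t : ℝ, 0 ≤ s → s ≤ t → dist (u s) (u t) ≤ ∫ r in s..t, m r := by
  have hmono : ∀ s t : ℝ, 0 ≤ s → MonotoneOn V (Icc s t) := fun s t hs =>
    hV.mono fun x hx => hs.trans hx.1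
  have hint : ∀ s t : ℝ, 0 ≤ s → s ≤ t →
      IntegrableOn (fun r => max (deriv V r) 0) (Icc s t) volume := by
    intro s t hs hst
    have h := (uIcc_of_le hst ▸ hmono s t hs : MonotoneOn V (uIcc s t)).intervalIntegrable_deriv
    exact ((intervalIntegrable_iff_integrableOn_Icc_of_le hst).1 h).pos_part
  refine ⟨fun r => √(deriv V r), fun T hT => ?_, fun s t hs hst => ?_⟩
  · refine (hint 0 T le_rfl hT.le).congr_fun (fun r _ => ?_) measurableSet_Icc
    rcases le_total 0 (deriv V r) with h | h
    · simp [Real.sq_sqrt h, h]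
    · simp [Real.sqrt_eq_zero_of_nonpos h, h]
  · set φ : ℝ → ℝ := fun r => dist (u s) (u r) with hφ
    have hφinc : ∀ x y, s ≤ x → x ≤ y → dist (φ x) (φ y) ^ 2 ≤ (y - x) * (V y - V x) := by
      intro x y hx hxy
      refine le_trans ?_ (hu x y (hs.trans hx) hxy)
      gcongr
      exact dist_dist_dist_le_right _ _ _
    have hac : AbsolutelyContinuousOnInterval φ s t :=
      absolutelyContinuousOnInterval_of_sq_dist_le hst (hmono s t hs)
        fun x y hx hxy _ => hφinc x y hx hxy
    have hftc := hac.integral_deriv_eq_sub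
    have hm : IntervalIntegrable (fun r => √(deriv V r)) volume s t := by
      rw [intervalIntegrable_iff_integrableOn_Icc_of_le hst]
      refine ((hint s t hs hst).add (integrableOn_const (C := (1 : ℝ)) (by simp))).mono'
        (measurable_deriv V).sqrt.aestronglyMeasurable (Eventually.of_forall fun r => ?_)
      rw [Real.norm_of_nonneg (Real.sqrt_nonneg _)]
      simp only [Pi.add_apply]
      rw [Real.sqrt_le_iff]
      refine ⟨by positivity, ?_⟩
      nlinarith [le_max_left (deriv V r) 0, le_max_right (deriv V r) 0]
    calc dist (u s) (u t) = φ t - φ s := by simp [hφ]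
      _ = ∫ r in s..t, deriv φ r := hftc.symm
      _ ≤ ∫ r in s..t, √(deriv V r) := by
        refine intervalIntegral.integral_mono_ae_restrict hst hac.intervalIntegrable_deriv hm ?_
        have hVd := (uIcc_of_le hst ▸ hmono s t hs :
          MonotoneOn V (uIcc s t)).ae_differentiableWithinAt_of_mem
        rw [Filter.EventuallyLE, ← restrict_Ioo_eq_restrict_Icc,
          ae_restrict_iff' measurableSet_Ioo]
        filter_upwards [hac.ae_differentiableAt, hVd] with x hx1 hx2 hx
        have hxm : x ∈ uIcc s t := by rw [uIcc_of_le hst]; exact Ioo_subset_Icc_self hx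
        have hVx : DifferentiableAt ℝ V x := (hx2 hxm).differentiableAt
          (by rw [uIcc_of_le hst]; exact Icc_mem_nhds hx.1 hx.2)
        refine Real.le_sqrt_of_sq_le (sq_deriv_le_deriv (hx1 hxm) hVx ?_)
        filter_upwards [self_mem_nhdsWithin] with y hy
        have := hφinc x y hx.1.le (le_of_lt hy)
        rwa [dist_comm, Real.dist_eq, sq_abs] at this

end SpeedBound

section Discrete

variable {X : Type*} [MetricSpace X]

lemma energy_ne_top_of_minimizer {E : X → EReal} {τ : ℝ} {u v z w : X}
    (hmin : bdf2Psi E τ u v z ≤ bdf2Psi E τ u v w) (hw : E w ≠ ⊤) : E z ≠ ⊤ := by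
  intro hz
  unfold bdf2Psi at hmin
  rw [hz, EReal.coe_add_top, top_le_iff] at hmin
  exact EReal.add_ne_top (EReal.coe_ne_top _) hw hmin

/-- Convexity of the penalization along a suitable curve improves minimality of `z` by a quadratic
term. -/
lemma minimizer_quadratic_gap {E : X → EReal} (hbot : ∀ w, E w ≠ ⊥) {τ lam : ℝ} {u v z w : X}
    (hmin : ∀ w, bdf2Psi E τ u v z ≤ bdf2Psi E τ u v w) (hz : E z ≠ ⊤) (hw : E w ≠ ⊤)
    {γ : ℝ → X}
    (hγ : ∀ s ∈ Icc (0 : ℝ) 1, bdf2Psi E τ u v (γ s)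
      ≤ ((1 - s : ℝ) : EReal) * bdf2Psi E τ u v z + ((s : ℝ) : EReal) * bdf2Psi E τ u v w
        - ((1 / 2 * (3 / (2 * τ) + lam) * s * (1 - s) * dist z w ^ 2 : ℝ) : EReal)) :
    1 / τ * dist v z ^ 2 - 1 / (4 * τ) * dist u z ^ 2 + (E z).toReal
        + 1 / 2 * (3 / (2 * τ) + lam) * dist z w ^ 2
      ≤ 1 / τ * dist v w ^ 2 - 1 / (4 * τ) * dist u w ^ 2 + (E w).toReal := by
  have hψ : ∀ y, E y ≠ ⊤ → bdf2Psi E τ u v y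
      = ((1 / τ * dist v y ^ 2 - 1 / (4 * τ) * dist u y ^ 2 + (E y).toReal : ℝ) : EReal) := by
    intro y hy
    rw [bdf2Psi, EReal.coe_add, EReal.coe_toReal hy (hbot y)]
  generalize hA : 1 / τ * dist v z ^ 2 - 1 / (4 * τ) * dist u z ^ 2 + (E z).toReal = A
  generalize hB : 1 / τ * dist v w ^ 2 - 1 / (4 * τ) * dist u w ^ 2 + (E w).toReal = B
  have hψz : bdf2Psi E τ u v z = (A : EReal) := by rw [hψ z hz, hA]
  have hψw : bdf2Psi E τ u v w = (B : EReal) := by rw [hψ w hw, hB]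
  set q := 1 / 2 * (3 / (2 * τ) + lam) * dist z w ^ 2 with hq
  have hs : ∀ s ∈ Ioc (0 : ℝ) 1, A + q * (1 - s) ≤ B := by
    intro s hs
    have h := (hmin (γ s)).trans (hγ s ⟨hs.1.le, hs.2⟩)
    rw [hψz, hψw, ← EReal.coe_mul, ← EReal.coe_mul, ← EReal.coe_add, ← EReal.coe_sub,
      EReal.coe_le_coe_iff] at h
    have h' : s * (A + q * (1 - s)) ≤ s * B := by rw [hq]; linarith
    exact le_of_mul_le_mul_left h' hs.1
  have hlim : Tendsto (fun s : ℝ => A + q * (1 - s)) (𝓝[>] 0) (𝓝 (A + q * (1 - 0))) :=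
    ((by fun_prop : Continuous fun s : ℝ => A + q * (1 - s)).tendsto 0).mono_left
      nhdsWithin_le_nhds
  rw [sub_zero, mul_one] at hlim
  refine le_of_tendsto hlim ?_
  filter_upwards [Ioc_mem_nhdsGT (zero_lt_one' ℝ)] with s h using hs s h

/-- The one-step variational inequality satisfied by BDF2 minimizers, tested with points of `D`. -/
def Bdf2VariationalIneq (D : Set X) (e : X → ℝ) (τ lam : ℝ) (v : ℕ → X) : Prop :=
  ∀ k, ∀ w ∈ D,
    1 / τ * dist (v (k + 1)) (v (k + 2)) ^ 2 - 1 / (4 * τ) * dist (v k) (v (k + 2)) ^ 2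
        + e (v (k + 2)) + 1 / 2 * (3 / (2 * τ) + lam) * dist (v (k + 2)) w ^ 2
      ≤ 1 / τ * dist (v (k + 1)) w ^ 2 - 1 / (4 * τ) * dist (v k) w ^ 2 + e w

namespace Bdf2VariationalIneq

variable {D : Set X} {e : X → ℝ} {τ lam : ℝ} {v : ℕ → X}

lemma sq_dist_two_step_le (v : ℕ → X) (k : ℕ) : dist (v k) (v (k + 2)) ^ 2
    ≤ 2 * dist (v k) (v (k + 1)) ^ 2 + 2 * dist (v (k + 1)) (v (k + 2)) ^ 2 := by
  have h := dist_triangle (v k) (v (k + 1)) (v (k + 2))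
  have h' : dist (v k) (v (k + 2)) ^ 2
      ≤ (dist (v k) (v (k + 1)) + dist (v (k + 1)) (v (k + 2))) ^ 2 := by gcongr
  nlinarith [sq_nonneg (dist (v k) (v (k + 1)) - dist (v (k + 1)) (v (k + 2)))]

lemma energy_step (h : Bdf2VariationalIneq D e τ lam v) (hτ : 0 < τ) (hlam : -lam * τ ≤ 1 / 2)
    (hD : ∀ k, v k ∈ D) (k : ℕ) :
    e (v (k + 2)) + 1 / (4 * τ) * dist (v (k + 1)) (v (k + 2)) ^ 2
        + 3 / (4 * τ) * dist (v (k + 1)) (v (k + 2)) ^ 2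
      ≤ e (v (k + 1)) + 1 / (4 * τ) * dist (v k) (v (k + 1)) ^ 2 := by
  have h1 := h k (v (k + 1)) (hD _)
  have h2 := sq_dist_two_step_le v k
  rw [dist_self, dist_comm (v (k + 2)) (v (k + 1))] at h1
  have h3 : 1 / (4 * τ) * dist (v k) (v (k + 2)) ^ 2 ≤ 1 / (4 * τ) *
      (2 * dist (v k) (v (k + 1)) ^ 2 + 2 * dist (v (k + 1)) (v (k + 2)) ^ 2) := by gcongr
  have h4 : -(1 / (2 * τ)) ≤ lam := by
    rw [neg_le, ← sub_nonneg]
    have : 1 / (2 * τ) - -lam = (1 / 2 - -lam * τ) / τ := by field_simp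
    rw [this]
    exact div_nonneg (by linarith) hτ.le
  have h5 := mul_le_mul_of_nonneg_right h4 (sq_nonneg (dist (v (k + 1)) (v (k + 2))))
  generalize dist (v k) (v (k + 1)) ^ 2 = x at *
  generalize dist (v (k + 1)) (v (k + 2)) ^ 2 = y at *
  generalize dist (v k) (v (k + 2)) ^ 2 = z at *
  have e1 : 1 / (4 * τ) = 1 / 4 * (1 / τ) := by field_simp
  have e2 : 3 / (4 * τ) = 3 / 4 * (1 / τ) := by field_simp
  have e3 : 3 / (2 * τ) = 3 / 2 * (1 / τ) := by field_simp
  have e4 : 1 / (2 * τ) = 1 / 2 * (1 / τ) := by field_simp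
  simp only [e1, e2, e3, e4] at h1 h3 h5 ⊢
  generalize 1 / τ = c at *
  nlinarith

lemma energy_sum (h : Bdf2VariationalIneq D e τ lam v) (hτ : 0 < τ) (hlam : -lam * τ ≤ 1 / 2)
    (hD : ∀ k, v k ∈ D) (N : ℕ) :
    e (v (N + 1)) + 3 / (4 * τ) * ∑ k ∈ Finset.range N, dist (v (k + 1)) (v (k + 2)) ^ 2
      ≤ e (v 1) + 1 / (4 * τ) * dist (v 0) (v 1) ^ 2 := by
  have key : e (v (N + 1)) + 1 / (4 * τ) * dist (v N) (v (N + 1)) ^ 2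
      + 3 / (4 * τ) * ∑ k ∈ Finset.range N, dist (v (k + 1)) (v (k + 2)) ^ 2
      ≤ e (v 1) + 1 / (4 * τ) * dist (v 0) (v 1) ^ 2 := by
    induction N with
    | zero => simp
    | succ N ih =>
      have := h.energy_step hτ hlam hD N
      rw [Finset.sum_range_succ, mul_add]
      linarith
  have : 0 ≤ 1 / (4 * τ) * dist (v N) (v (N + 1)) ^ 2 := by positivity
  linarith

lemma evi_sum (h : Bdf2VariationalIneq D e τ lam v) (hτ : 0 < τ) {w : X} (hw : w ∈ D)
    {i j : ℕ} (hij : i ≤ j) :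
    3 / 4 * (dist (v (j + 1)) w ^ 2 - dist (v (i + 1)) w ^ 2)
        - 1 / 4 * (dist (v j) w ^ 2 - dist (v i) w ^ 2) - 1 / 2 * dist (v i) (v (i + 1)) ^ 2
      ≤ ∑ k ∈ Finset.Ico i j,
          τ * (e w - e (v (k + 2)) - lam / 2 * dist (v (k + 2)) w ^ 2) := by
  have key : 3 / 4 * (dist (v (j + 1)) w ^ 2 - dist (v (i + 1)) w ^ 2)
        - 1 / 4 * (dist (v j) w ^ 2 - dist (v i) w ^ 2) - 1 / 2 * dist (v i) (v (i + 1)) ^ 2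
        + 1 / 2 * dist (v j) (v (j + 1)) ^ 2
      ≤ ∑ k ∈ Finset.Ico i j,
          τ * (e w - e (v (k + 2)) - lam / 2 * dist (v (k + 2)) w ^ 2) := by
    induction j, hij using Nat.le_induction with
    | base => simp
    | succ j hj ih =>
      rw [Finset.sum_Ico_succ_top hj]
      have h1 := mul_le_mul_of_nonneg_left (h j w hw) hτ.le
      have h2 := sq_dist_two_step_le v j
      have h3 : τ * (1 / τ * dist (v (j + 1)) (v (j + 2)) ^ 2
            - 1 / (4 * τ) * dist (v j) (v (j + 2)) ^ 2
            + e (v (j + 2)) + 1 / 2 * (3 / (2 * τ) + lam) * dist (v (j + 2)) w ^ 2)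
          = dist (v (j + 1)) (v (j + 2)) ^ 2 - 1 / 4 * dist (v j) (v (j + 2)) ^ 2
            + τ * e (v (j + 2)) + 3 / 4 * dist (v (j + 2)) w ^ 2
            + τ * (lam / 2 * dist (v (j + 2)) w ^ 2) := by
        field_simp; ring
      have h4 : τ * (1 / τ * dist (v (j + 1)) w ^ 2 - 1 / (4 * τ) * dist (v j) w ^ 2 + e w)
          = dist (v (j + 1)) w ^ 2 - 1 / 4 * dist (v j) w ^ 2 + τ * e w := by
        field_simp
      rw [h3, h4] at h1
      simp only [add_assoc, one_add_one_eq_two] at ih ⊢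
      linarith
  linarith [sq_nonneg (dist (v j) (v (j + 1)))]

end Bdf2VariationalIneq

/-- The integral of a piecewise constant interpolation over grid points. -/
lemma integral_ceil_eq_sum (g : ℕ → ℝ) {τ : ℝ} (hτ : 0 < τ) {i j : ℕ} (hij : i ≤ j) :
    ∫ r in (i * τ)..(j * τ), g ⌈r / τ⌉₊ = ∑ k ∈ Finset.Ico i j, τ * g (k + 1) := by
  have hpiece : ∀ k : ℕ, EqOn (fun _ => g (k + 1)) (fun r => g ⌈r / τ⌉₊)
      (uIoc (k * τ) ((k + 1 : ℕ) * τ)) := by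
    intro k r hr
    rw [uIoc_of_le (by push_cast; nlinarith)] at hr
    have : ⌈r / τ⌉₊ = k + 1 := by
      rw [Nat.ceil_eq_iff (by simp), lt_div_iff₀ hτ, div_le_iff₀ hτ]
      simpa using hr
    simp [this]
  rw [← intervalIntegral.sum_integral_adjacent_intervals_Ico (a := fun k : ℕ => (k : ℝ) * τ) hij]
  · refine Finset.sum_congr rfl fun k _ => ?_
    rw [← intervalIntegral.integral_congr_ae (Eventually.of_forall fun r hr => hpiece k hr),
      intervalIntegral.integral_const, smul_eq_mul]
    push_cast; ring
  · intro k _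
    exact intervalIntegrable_const.congr (hpiece k)

/-- Bound for the squared displacement of a sequence by its accumulated squared steps. -/
lemma sq_dist_le_card_mul_sum (v : ℕ → X) {i j : ℕ} (hij : i ≤ j) :
    dist (v i) (v j) ^ 2
      ≤ ((j : ℝ) - i) * ∑ k ∈ Finset.Ico i j, dist (v k) (v (k + 1)) ^ 2 := by
  have h1 := dist_le_Ico_sum_dist v hij
  have h2 := sq_sum_le_card_mul_sum_sq (s := Finset.Ico i j)
    (f := fun k => dist (v k) (v (k + 1)))
  rw [Nat.card_Ico, Nat.cast_sub hij] at h2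
  exact le_trans (by gcongr) h2

end Discrete

section Limit

variable {X : Type*} [MetricSpace X]

/-- A family of discrete BDF2 trajectories with vanishing step sizes and uniformly controlled
initial data, for an energy that is bounded below by a negative quadratic. -/
structure IsBdf2Family (D : Set X) (e : X → ℝ) (lam K₁ K : ℝ) (τ : ℕ → ℝ) (u : ℕ → ℕ → X) :
    Prop where
  pos : ∀ n, 0 < τ n
  neg_mul_le : ∀ n, -lam * τ n ≤ 1 / 2
  tendsto_zero : Tendsto τ atTop (𝓝 0)
  ineq : ∀ n, Bdf2VariationalIneq D e (τ n) lam (u n)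
  mem : ∀ n k, u n k ∈ D
  energy_init : ∀ n, e (u n 1) ≤ K₁
  step_init : ∀ n, dist (u n 0) (u n 1) ^ 2 ≤ K * τ n
  lower : ∃ (c κ : ℝ) (x₀ : X), 0 ≤ κ ∧ ∀ x ∈ D, c - κ * dist x x₀ ^ 2 ≤ e x

/-- A locally uniform limit of piecewise constant interpolations is approached boundedly on compact
time intervals. -/
lemma exists_bound_of_tendstoLocallyUniformlyOn {τ : ℕ → ℝ} {u : ℕ → ℕ → X} {ulim : ℝ → X}
    (hτ : ∀ n, 0 < τ n)
    (hconv : TendstoLocallyUniformlyOn (fun n t => bdf2Interp (u n) (τ n) t) ulim atTop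
      (Ici (0 : ℝ))) (x₀ : X) (T : ℝ) :
    ∃ R, 0 ≤ R ∧ (∀ t ∈ Icc 0 T, dist (ulim t) x₀ ≤ R) ∧
      ∀ᶠ n in atTop, ∀ t ∈ Icc 0 T, dist (bdf2Interp (u n) (τ n) t) x₀ ≤ R := by
  have hunif := (tendstoLocallyUniformlyOn_iff_tendstoUniformlyOn_of_compact
    (isCompact_Icc (a := (0 : ℝ)) (b := T))).1 (hconv.mono Icc_subset_Ici_self)
  have hev := Metric.tendstoUniformlyOn_iff.1 hunif 1 one_pos
  obtain ⟨n₀, hn₀⟩ := hev.exists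
  obtain ⟨R, hR⟩ : ∃ R, ∀ t ∈ Icc 0 T, dist (bdf2Interp (u n₀) (τ n₀) t) x₀ ≤ R := by
    obtain ⟨R, hR⟩ := ((Finset.range (⌈T / τ n₀⌉₊ + 2)).image
      fun k => dist (u n₀ k) x₀).bddAbove
    refine ⟨R, fun t ht => hR ?_⟩
    have : ⌈t / τ n₀⌉₊ ≤ ⌈T / τ n₀⌉₊ :=
      Nat.ceil_mono (div_le_div_of_nonneg_right ht.2 (hτ n₀).le)
    simp only [Finset.coe_image, Set.mem_image, Finset.mem_coe, Finset.mem_range]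
    exact ⟨⌈t / τ n₀⌉₊ + 1, by omega, rfl⟩
  have hlim : ∀ t ∈ Icc 0 T, dist (ulim t) x₀ ≤ |R| + 1 := fun t ht => by
    linarith [dist_triangle (ulim t) (bdf2Interp (u n₀) (τ n₀) t) x₀, hn₀ t ht, hR t ht,
      le_abs_self R]
  refine ⟨|R| + 2, by positivity, fun t ht => by linarith [hlim t ht], ?_⟩
  filter_upwards [hev] with n hn t ht
  linarith [dist_triangle_left (bdf2Interp (u n) (τ n) t) x₀ (ulim t), hn t ht, hlim t ht]

namespace IsBdf2Family

variable {D : Set X} {e : X → ℝ} {lam K₁ K : ℝ} {τ : ℕ → ℝ} {u : ℕ → ℕ → X} {ulim : ℝ → X}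

lemma energy_add_sum_le (h : IsBdf2Family D e lam K₁ K τ u) (n N : ℕ) :
    e (u n (N + 1)) + 3 / (4 * τ n) * ∑ k ∈ Finset.range N, dist (u n (k + 1)) (u n (k + 2)) ^ 2
      ≤ K₁ + K / 4 := by
  have h1 := (h.ineq n).energy_sum (h.pos n) (h.neg_mul_le n) (h.mem n) N
  have hτ := h.pos n
  have h2 : 1 / (4 * τ n) * dist (u n 0) (u n 1) ^ 2 ≤ 1 / (4 * τ n) * (K * τ n) := by
    gcongr; exact h.step_init n
  have h3 : 1 / (4 * τ n) * (K * τ n) = K / 4 := by field_simp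
  linarith [h.energy_init n]

lemma energy_le (h : IsBdf2Family D e lam K₁ K τ u) (n N : ℕ) :
    e (u n (N + 1)) ≤ K₁ + K / 4 := by
  have h1 := h.energy_add_sum_le n N
  have hτ := h.pos n
  have : 0 ≤ 3 / (4 * τ n)
      * ∑ k ∈ Finset.range N, dist (u n (k + 1)) (u n (k + 2)) ^ 2 := by positivity
  linarith

lemma exists_le_energy (h : IsBdf2Family D e lam K₁ K τ u)
    (hconv : TendstoLocallyUniformlyOn (fun n t => bdf2Interp (u n) (τ n) t) ulim atTop
      (Ici (0 : ℝ))) (T : ℝ) :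
    ∃ B, (∀ t ∈ Icc 0 T, ulim t ∈ D → -B ≤ e (ulim t)) ∧
      ∀ᶠ n in atTop, ∀ t ∈ Icc 0 T, -B ≤ e (bdf2Interp (u n) (τ n) t) := by
  obtain ⟨c, κ, x₀, hκ, hlow⟩ := h.lower
  obtain ⟨R, hR0, hR, hRn⟩ := exists_bound_of_tendstoLocallyUniformlyOn h.pos hconv x₀ T
  have key : ∀ x ∈ D, dist x x₀ ≤ R → -(κ * R ^ 2 - c) ≤ e x := by
    intro x hx hxR
    have : κ * dist x x₀ ^ 2 ≤ κ * R ^ 2 := by gcongr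
    linarith [hlow x hx]
  refine ⟨κ * R ^ 2 - c, fun t ht hD => key _ hD (hR t ht), ?_⟩
  filter_upwards [hRn] with n hn t ht using key _ (h.mem n _) (hn t ht)

lemma exists_sum_sq_step_le (h : IsBdf2Family D e lam K₁ K τ u)
    (hconv : TendstoLocallyUniformlyOn (fun n t => bdf2Interp (u n) (τ n) t) ulim atTop
      (Ici (0 : ℝ))) {T : ℝ} (hT : 0 ≤ T) :
    ∃ C, ∀ᶠ n in atTop,
      ∑ k ∈ Finset.range (⌈T / τ n⌉₊ + 1), dist (u n k) (u n (k + 1)) ^ 2 ≤ C * τ n := by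
  obtain ⟨B, -, hB⟩ := h.exists_le_energy hconv T
  refine ⟨4 / 3 * (K₁ + K / 4 + B) + K, ?_⟩
  filter_upwards [hB] with n hn
  have h1 := h.energy_add_sum_le n ⌈T / τ n⌉₊
  have h2 : -B ≤ e (u n (⌈T / τ n⌉₊ + 1)) := hn T ⟨hT, le_rfl⟩
  have hτ := h.pos n
  rw [Finset.sum_range_succ', add_mul]
  refine add_le_add ?_ (h.step_init n)
  generalize ∑ k ∈ Finset.range ⌈T / τ n⌉₊, dist (u n (k + 1)) (u n (k + 2)) ^ 2 = S at *
  have h3 : 3 / (4 * τ n) * S ≤ K₁ + K / 4 + B := by linarith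
  have h4 : 3 / (4 * τ n) * S = 3 / 4 * S / τ n := by field_simp
  rw [h4, div_le_iff₀ hτ] at h3
  linarith

lemma tendsto_sq_step (h : IsBdf2Family D e lam K₁ K τ u)
    (hconv : TendstoLocallyUniformlyOn (fun n t => bdf2Interp (u n) (τ n) t) ulim atTop
      (Ici (0 : ℝ))) {t : ℝ} (ht : 0 ≤ t) :
    Tendsto (fun n => dist (u n ⌈t / τ n⌉₊) (u n (⌈t / τ n⌉₊ + 1)) ^ 2) atTop (𝓝 0) := by
  obtain ⟨C, hC⟩ := h.exists_sum_sq_step_le hconv ht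
  refine squeeze_zero' (Eventually.of_forall fun n => by positivity) ?_
    (by simpa using h.tendsto_zero.const_mul C)
  filter_upwards [hC] with n hn
  refine le_trans ?_ hn
  exact Finset.single_le_sum (f := fun k => dist (u n k) (u n (k + 1)) ^ 2)
    (fun k _ => by positivity) (by simp)

/-- The discrete actions have a common monotone limit along an ultrafilter, which controls the
squared increments of the limit curve. -/
lemma exists_monotone_action (h : IsBdf2Family D e lam K₁ K τ u)
    (hconv : TendstoLocallyUniformlyOn (fun n t => bdf2Interp (u n) (τ n) t) ulim atTop
      (Ici (0 : ℝ))) :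
    ∃ V : ℝ → ℝ, MonotoneOn V (Ici 0) ∧
      ∀ s t, 0 ≤ s → s ≤ t → dist (ulim s) (ulim t) ^ 2 ≤ (t - s) * (V t - V s) := by
  set S : ℕ → ℝ → ℝ := fun n t =>
    (∑ k ∈ Finset.range (⌈t / τ n⌉₊ + 1), dist (u n k) (u n (k + 1)) ^ 2) / τ n with hS
  let 𝓤 : Ultrafilter ℕ := Ultrafilter.of atTop
  have h𝓤 : (𝓤 : Filter ℕ) ≤ atTop := Ultrafilter.of_le atTop
  have hlim : ∀ t : ℝ, ∃ l, 0 ≤ t → Tendsto (fun n => S n t) 𝓤 (𝓝 l) := by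
    intro t
    by_cases ht : 0 ≤ t
    · obtain ⟨C, hC⟩ := h.exists_sum_sq_step_le hconv ht
      have hmem : ∀ᶠ n in (𝓤 : Filter ℕ), S n t ∈ Icc 0 C := by
        filter_upwards [h𝓤 hC] with n hn
        have hτ := h.pos n
        exact ⟨by positivity, (div_le_iff₀ hτ).2 hn⟩
      obtain ⟨l, -, hl⟩ := (isCompact_Icc (a := (0 : ℝ)) (b := C)).ultrafilter_le_nhds
        (𝓤.map fun n => S n t) (le_principal_iff.2 hmem)
      exact ⟨l, fun _ => hl⟩
    · exact ⟨0, fun h' => absurd h' ht⟩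
  choose V hV using hlim
  have hceil : ∀ n {s t : ℝ}, s ≤ t → ⌈s / τ n⌉₊ ≤ ⌈t / τ n⌉₊ := fun n s t hst =>
    Nat.ceil_mono (div_le_div_of_nonneg_right hst (h.pos n).le)
  refine ⟨V, fun s hs t ht hst => ?_, fun s t hs hst => ?_⟩
  · refine le_of_tendsto_of_tendsto (hV s hs) (hV t ht) (Eventually.of_forall fun n => ?_)
    have hτ := h.pos n
    simp only [hS]
    gcongr
  · have ht := hs.trans hst
    have hu : ∀ r, 0 ≤ r → Tendsto (fun n => bdf2Interp (u n) (τ n) r) 𝓤 (𝓝 (ulim r)) :=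
      fun r hr => (hconv.tendsto_at hr).mono_left h𝓤
    have hτ0 : Tendsto τ 𝓤 (𝓝 0) := h.tendsto_zero.mono_left h𝓤
    have hright : Tendsto (fun n => (t - s + τ n) * (S n t - S n s)) 𝓤
        (𝓝 ((t - s) * (V t - V s))) := by
      simpa using (hτ0.const_add (t - s)).mul ((hV t ht).sub (hV s hs))
    refine le_of_tendsto_of_tendsto (((hu s hs).dist (hu t ht)).pow 2) hright
      (Eventually.of_forall fun n => ?_)
    have hτ := h.pos n
    have h1 := sq_dist_le_card_mul_sum (u n) (Nat.succ_le_succ (hceil n hst))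
    rw [Finset.sum_Ico_eq_sub _ (Nat.succ_le_succ (hceil n hst))] at h1
    have h2 : (⌈t / τ n⌉₊ : ℝ) * τ n ≤ t + τ n := by
      have := Nat.ceil_lt_add_one (div_nonneg ht hτ.le)
      calc (⌈t / τ n⌉₊ : ℝ) * τ n ≤ (t / τ n + 1) * τ n := by gcongr
        _ = t + τ n := by field_simp
    have h3 : s ≤ (⌈s / τ n⌉₊ : ℝ) * τ n := (div_le_iff₀ hτ).1 (Nat.le_ceil _)
    have h4 : 0 ≤ S n t - S n s := by
      rw [sub_nonneg]
      simp only [hS]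
      gcongr
    calc _ ≤ _ := h1
      _ = ((⌈t / τ n⌉₊ : ℝ) * τ n - ⌈s / τ n⌉₊ * τ n) * (S n t - S n s) := by
        simp only [hS, Nat.succ_eq_add_one]; push_cast; field_simp; ring
      _ ≤ (t - s + τ n) * (S n t - S n s) := mul_le_mul_of_nonneg_right (by linarith) h4

lemma continuous_limit_comp_max (h : IsBdf2Family D e lam K₁ K τ u)
    (hconv : TendstoLocallyUniformlyOn (fun n t => bdf2Interp (u n) (τ n) t) ulim atTop
      (Ici (0 : ℝ))) : Continuous fun r => ulim (max r 0) := by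
  obtain ⟨V, hV, hu⟩ := h.exists_monotone_action hconv
  have hcont : ContinuousOn ulim (Ici 0) := by
    intro x hx
    have hx1 : (0 : ℝ) ≤ x + 1 := by linarith [mem_Ici.1 hx]
    have hac : AbsolutelyContinuousOnInterval (fun r => dist (ulim r) (ulim x)) 0 (x + 1) :=
      absolutelyContinuousOnInterval_of_sq_dist_le hx1 (hV.mono Icc_subset_Ici_self)
        fun s t hs hst _ => le_trans (by gcongr; exact dist_dist_dist_le_left _ _ _)
          (hu s t hs hst)
    have hc := hac.continuousOn x (by rw [uIcc_of_le hx1]; exact ⟨hx, by linarith⟩)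
    rw [uIcc_of_le hx1] at hc
    have hnhds : Icc 0 (x + 1) ∈ 𝓝[Ici 0] x := by
      rw [← Ici_inter_Iic]
      exact inter_mem self_mem_nhdsWithin
        (mem_nhdsWithin_of_mem_nhds (Iic_mem_nhds (by linarith)))
    rw [ContinuousWithinAt, tendsto_iff_dist_tendsto_zero]
    simpa [ContinuousWithinAt] using hc.mono_of_mem_nhdsWithin hnhds
  exact hcont.comp_continuous (by fun_prop) fun r => mem_Ici.2 (le_max_right _ _)

end IsBdf2Family

lemma intervalIntegrable_of_abs_le {G : ℝ → ℝ} (hG : Measurable G) {s t C : ℝ}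
    (hC : ∀ r ∈ uIcc s t, |G r| ≤ C) : IntervalIntegrable G volume s t := by
  refine (intervalIntegrable_const (c := C)).mono_fun' hG.aestronglyMeasurable ?_
  refine (ae_restrict_iff' measurableSet_uIoc).2 (Eventually.of_forall fun r hr => ?_)
  exact hC r (uIoc_subset_uIcc hr)

/-- A bounded one-sided version of dominated convergence. -/
lemma le_integral_of_eventually_le_add {A : ℕ → ℝ} {a s t C : ℝ} (hst : s ≤ t)
    {Gn : ℕ → ℝ → ℝ} {G : ℝ → ℝ} (hGn : ∀ n, Measurable (Gn n)) (hG : Measurable G)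
    (hbn : ∀ᶠ n in atTop, ∀ r ∈ Icc s t, |Gn n r| ≤ C) (hb : ∀ r ∈ Icc s t, |G r| ≤ C)
    (hlim : ∀ r ∈ Icc s t, ∀ ε > 0, ∀ᶠ n in atTop, Gn n r ≤ G r + ε)
    (hA : Tendsto A atTop (𝓝 a)) (hle : ∀ᶠ n in atTop, A n ≤ ∫ r in s..t, Gn n r) :
    a ≤ ∫ r in s..t, G r := by
  have habs : ∀ {x y : ℝ}, |x| ≤ C → |y| ≤ C → |max x y| ≤ C := fun hx hy =>
    abs_max_le_max_abs_abs.trans (max_le hx hy)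
  have hmax : Tendsto (fun n => ∫ r in s..t, max (Gn n r) (G r)) atTop
      (𝓝 (∫ r in s..t, G r)) := by
    refine intervalIntegral.tendsto_integral_filter_of_dominated_convergence (fun _ => C)
      (Eventually.of_forall fun n => ((hGn n).max hG).aestronglyMeasurable) ?_
      intervalIntegrable_const ?_
    · filter_upwards [hbn] with n hn
      refine Eventually.of_forall fun r hr => ?_
      rw [uIoc_of_le hst] at hr
      exact habs (hn r (Ioc_subset_Icc_self hr)) (hb r (Ioc_subset_Icc_self hr))
    · refine Eventually.of_forall fun r hr => ?_
      rw [uIoc_of_le hst] at hr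
      rw [Metric.tendsto_nhds]
      intro ε hε
      filter_upwards [hlim r (Ioc_subset_Icc_self hr) (ε / 2) (by positivity)] with n hn
      rw [Real.dist_eq, abs_of_nonneg (sub_nonneg.2 (le_max_right _ _)), sub_lt_iff_lt_add,
        max_lt_iff]
      constructor <;> linarith
  refine le_of_tendsto_of_tendsto hA hmax ?_
  filter_upwards [hle, hbn] with n hn hbn
  refine hn.trans (intervalIntegral.integral_mono_on hst ?_ ?_ fun r _ => le_max_left _ _)
  · exact intervalIntegrable_of_abs_le (hGn n) (by rwa [uIcc_of_le hst])
  · refine intervalIntegrable_of_abs_le (C := C) ((hGn n).max hG) ?_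
    rw [uIcc_of_le hst]
    exact fun r hr => habs (hbn r hr) (hb r hr)

namespace IsBdf2Family

variable {D : Set X} {e : X → ℝ} {lam K₁ K : ℝ} {τ : ℕ → ℝ} {u : ℕ → ℕ → X} {ulim : ℝ → X}

/-- The integrated evolution variational inequality holds in the limit. -/
theorem evi_limit (h : IsBdf2Family D e lam K₁ K τ u)
    (hconv : TendstoLocallyUniformlyOn (fun n t => bdf2Interp (u n) (τ n) t) ulim atTop
      (Ici (0 : ℝ)))
    (hmem : ∀ r, 0 ≤ r → ulim r ∈ D) (hmeas : Measurable fun r => e (ulim (max r 0)))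
    (hlsc : ∀ r, 0 ≤ r → ∀ ε > 0, ∀ᶠ n in atTop,
      e (ulim r) ≤ e (bdf2Interp (u n) (τ n) r) + ε)
    {s t : ℝ} (hs : 0 ≤ s) (hst : s ≤ t) {w : X} (hw : w ∈ D) :
    (1 / 2) * dist (ulim t) w ^ 2 - (1 / 2) * dist (ulim s) w ^ 2
      ≤ ∫ r in s..t, (e w - e (ulim r) - lam / 2 * dist (ulim r) w ^ 2) := by
  have ht := hs.trans hst
  obtain ⟨B, hB, hBn⟩ := h.exists_le_energy hconv (t + 1)
  obtain ⟨R, hR0, hR, hRn⟩ := exists_bound_of_tendstoLocallyUniformlyOn h.pos hconv w (t + 1)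
  set M := K₁ + K / 4 with hM
  set C := |e w| + (|B| + |M| + 1) + |lam| / 2 * R ^ 2 with hC
  have hbound : ∀ x, -B ≤ e x → e x ≤ M + 1 → dist x w ≤ R →
      |e w - e x - lam / 2 * dist x w ^ 2| ≤ C := by
    intro x h1 h2 h3
    have h4 : |e x| ≤ |B| + |M| + 1 := abs_le.2
      ⟨by linarith [le_abs_self B, abs_nonneg M], by linarith [le_abs_self M, abs_nonneg B]⟩
    have h5 : |lam / 2 * dist x w ^ 2| ≤ |lam| / 2 * R ^ 2 := by
      rw [abs_mul, abs_div, abs_two, abs_of_nonneg (sq_nonneg (dist x w))]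
      gcongr
    calc _ ≤ |e w - e x| + |lam / 2 * dist x w ^ 2| := abs_sub _ _
      _ ≤ |e w| + |e x| + |lam / 2 * dist x w ^ 2| := by gcongr; exact abs_sub _ _
      _ ≤ C := by rw [hC]; gcongr
  have hlimle : ∀ r, 0 ≤ r → e (ulim r) ≤ M + 1 := fun r hr => by
    obtain ⟨n, hn⟩ := (hlsc r hr 1 one_pos).exists
    have := h.energy_le n ⌈r / τ n⌉₊
    simp only [bdf2Interp] at hn
    linarith
  have hpos : ∀ r ∈ uIcc s t, max r 0 = r := fun r hr => by
    rw [uIcc_of_le hst] at hr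
    exact max_eq_left (hs.trans hr.1)
  set Gn : ℕ → ℝ → ℝ := fun n r => e w - e (bdf2Interp (u n) (τ n) r)
    - lam / 2 * dist (bdf2Interp (u n) (τ n) r) w ^ 2 with hGn
  set G : ℝ → ℝ := fun r => e w - e (ulim (max r 0)) - lam / 2 * dist (ulim (max r 0)) w ^ 2
    with hG
  have hGint : ∫ r in s..t, (e w - e (ulim r) - lam / 2 * dist (ulim r) w ^ 2)
      = ∫ r in s..t, G r :=
    intervalIntegral.integral_congr fun r hr => by simp only [hG, hpos r hr]
  have hGnmeas : ∀ n, Measurable (Gn n) := fun n =>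
    (measurable_of_countable fun k : ℕ =>
      e w - e (u n (k + 1)) - lam / 2 * dist (u n (k + 1)) w ^ 2).comp
      (Nat.measurable_ceil.comp (measurable_id.div_const (τ n)))
  have hGmeas : Measurable G := by
    have hc := h.continuous_limit_comp_max hconv
    exact (hmeas.const_sub _).sub
      (((hc.dist continuous_const).pow 2).const_mul _).measurable
  have hGnb : ∀ᶠ n in atTop, ∀ r ∈ Icc 0 (t + 1), |Gn n r| ≤ C := by
    filter_upwards [hBn, hRn] with n h1 h2 r hr
    exact hbound _ (h1 r hr) ((h.energy_le n _).trans (by linarith)) (h2 r hr)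
  have hsub : Icc s t ⊆ Icc 0 (t + 1) := Icc_subset_Icc hs (by linarith)
  have hu : ∀ r, 0 ≤ r → Tendsto (fun n => u n (⌈r / τ n⌉₊ + 1)) atTop (𝓝 (ulim r)) :=
    fun r hr => hconv.tendsto_at hr
  have hu' : ∀ r, 0 ≤ r → Tendsto (fun n => u n ⌈r / τ n⌉₊) atTop (𝓝 (ulim r)) := by
    intro r hr
    refine (tendsto_iff_of_dist ?_).2 (hu r hr)
    simpa using (h.tendsto_sq_step hconv hr).sqrt
  rw [hGint]
  set A : ℕ → ℝ := fun n =>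
    3 / 4 * (dist (u n (⌈t / τ n⌉₊ + 1)) w ^ 2 - dist (u n (⌈s / τ n⌉₊ + 1)) w ^ 2)
      - 1 / 4 * (dist (u n ⌈t / τ n⌉₊) w ^ 2 - dist (u n ⌈s / τ n⌉₊) w ^ 2)
      - 1 / 2 * dist (u n ⌈s / τ n⌉₊) (u n (⌈s / τ n⌉₊ + 1)) ^ 2 - 2 * C * τ n with hA
  refine le_integral_of_eventually_le_add (A := A) hst hGnmeas hGmeas (C := C)
    (hGnb.mono fun n hn r hr => hn r (hsub hr)) ?_ ?_ ?_ ?_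
  · intro r hr
    have hr0 : 0 ≤ r := hs.trans hr.1
    simp only [hG, max_eq_left hr0]
    exact hbound _ (hB r (hsub hr) (hmem r hr0)) (hlimle r hr0) (hR r (hsub hr))
  · intro r hr ε hε
    have hr0 : 0 ≤ r := hs.trans hr.1
    have hd : Tendsto (fun n => lam / 2 * dist (bdf2Interp (u n) (τ n) r) w ^ 2) atTop
        (𝓝 (lam / 2 * dist (ulim r) w ^ 2)) :=
      (((hu r hr0).dist tendsto_const_nhds).pow 2).const_mul _
    filter_upwards [hlsc r hr0 (ε / 2) (by positivity),
      hd.eventually (lt_mem_nhds (sub_lt_self _ (half_pos hε)))] with n h1 h2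
    simp only [hGn, hG, max_eq_left hr0]
    linarith
  · have hd : ∀ r, 0 ≤ r → Tendsto (fun n => dist (u n (⌈r / τ n⌉₊ + 1)) w ^ 2) atTop
        (𝓝 (dist (ulim r) w ^ 2)) := fun r hr => ((hu r hr).dist tendsto_const_nhds).pow 2
    have hd' : ∀ r, 0 ≤ r → Tendsto (fun n => dist (u n ⌈r / τ n⌉₊) w ^ 2) atTop
        (𝓝 (dist (ulim r) w ^ 2)) := fun r hr => ((hu' r hr).dist tendsto_const_nhds).pow 2
    have := ((((hd t ht).sub (hd s hs)).const_mul (3 / 4)).sub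
      (((hd' t ht).sub (hd' s hs)).const_mul (1 / 4))).sub
      ((h.tendsto_sq_step hconv hs).const_mul (1 / 2)) |>.sub (h.tendsto_zero.const_mul (2 * C))
    convert this using 2
    ring
  · filter_upwards [hGnb, h.tendsto_zero.eventually (gt_mem_nhds one_pos)] with n hn hτ1
    have hτ := h.pos n
    have hij : ⌈s / τ n⌉₊ ≤ ⌈t / τ n⌉₊ := Nat.ceil_mono (div_le_div_of_nonneg_right hst hτ.le)
    have hsum := (h.ineq n).evi_sum hτ hw hij
    have hup : ∀ r, 0 ≤ r → (⌈r / τ n⌉₊ : ℝ) * τ n ≤ r + τ n := fun r hr => by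
      have := Nat.ceil_lt_add_one (div_nonneg hr hτ.le)
      calc (⌈r / τ n⌉₊ : ℝ) * τ n ≤ (r / τ n + 1) * τ n := by gcongr
        _ = r + τ n := by field_simp
    have hlo : ∀ r, r ≤ (⌈r / τ n⌉₊ : ℝ) * τ n := fun r =>
      (div_le_iff₀ hτ).1 (Nat.le_ceil _)
    have hgrid := integral_ceil_eq_sum
      (fun k => e w - e (u n (k + 1)) - lam / 2 * dist (u n (k + 1)) w ^ 2) hτ hij
    rw [← hgrid] at hsum
    have hGn' : (fun r : ℝ => e w - e (u n (⌈r / τ n⌉₊ + 1))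
        - lam / 2 * dist (u n (⌈r / τ n⌉₊ + 1)) w ^ 2) = Gn n := rfl
    rw [hGn'] at hsum
    set p := (⌈s / τ n⌉₊ : ℝ) * τ n
    set q := (⌈t / τ n⌉₊ : ℝ) * τ n
    have hii : ∀ x y, x ∈ Icc 0 (t + 1) → y ∈ Icc 0 (t + 1) →
        IntervalIntegrable (Gn n) volume x y := fun x y hx hy =>
      intervalIntegrable_of_abs_le (hGnmeas n) fun r hr => hn r (uIcc_subset_Icc hx hy hr)
    have hsm : s ∈ Icc 0 (t + 1) := ⟨hs, by linarith⟩
    have htm : t ∈ Icc 0 (t + 1) := ⟨ht, by linarith⟩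
    have hpm : p ∈ Icc 0 (t + 1) := ⟨hs.trans (hlo s), by linarith [hup s hs]⟩
    have hqm : q ∈ Icc 0 (t + 1) := ⟨ht.trans (hlo t), by linarith [hup t ht]⟩
    have hshort : ∀ x y, x ∈ Icc 0 (t + 1) → y ∈ Icc 0 (t + 1) → x ≤ y → y ≤ x + τ n →
        |∫ r in x..y, Gn n r| ≤ C * τ n := by
      intro x y hx hy hxy hyx
      have hC0 : 0 ≤ C := by positivity
      have h1 := intervalIntegral.norm_integral_le_of_norm_le_const (f := Gn n) (C := C)
        (a := x) (b := y) fun r hr => hn r (uIcc_subset_Icc hx hy (uIoc_subset_uIcc hr))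
      rw [Real.norm_eq_abs, abs_of_nonneg (sub_nonneg.2 hxy)] at h1
      exact h1.trans (by gcongr; linarith)
    have h1 := intervalIntegral.integral_add_adjacent_intervals (hii s p hsm hpm) (hii p q hpm hqm)
    have h2 := intervalIntegral.integral_add_adjacent_intervals (hii s t hsm htm) (hii t q htm hqm)
    have h3 := (abs_le.1 (hshort s p hsm hpm (hlo s) (hup s hs))).1
    have h4 := (abs_le.1 (hshort t q htm hqm (hlo t) (hup t ht))).2
    simp only [hA]
    linarith

end IsBdf2Family

end Limit

end BdfTwoConvergence

/-- main convergence theorem, part 2: the locally uniform limit `u_*` of the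
piecewise constant BDF2 interpolations is an `AC²` curve and satisfies the integrated
evolution variational inequality with parameter `λ`. -/
theorem bdf2_limit_is_EVI_flow {X : Type*} [MetricSpace X] [CompleteSpace X]
    [TopologicalSpace.SeparableSpace X]
    (E : X → EReal) (hbot : ∀ w, E w ≠ ⊥) (hdom : ∃ w, E w ≠ ⊤)
    (τs lam : ℝ) (hτs : 0 < τs) (hlam : lam ≤ 0) (hlamτs : (-lam) * τs ≤ 1 / 2)
    (hE1 : ∀ (un : ℕ → X) (x : X), Tendsto un atTop (nhds x) →
      E x ≤ liminf (fun n => E (un n)) atTop)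
    (ustar : X) (cstar : EReal)
    (hcstar : cstar = ⨅ v : X, (((1 / (2 * τs)) * dist ustar v ^ 2 : ℝ) : EReal) + E v)
    (hE2 : ⊥ < cstar)
    (hE3 : ∀ τ ∈ Set.Ioo (0 : ℝ) τs, ∀ u v γ₀ γ₁ : X, E γ₀ ≠ ⊤ → E γ₁ ≠ ⊤ →
      ∃ γ : ℝ → X, ContinuousOn γ (Set.Icc 0 1) ∧ γ 0 = γ₀ ∧ γ 1 = γ₁ ∧
        ∀ s ∈ Set.Icc (0 : ℝ) 1,
          bdf2Psi E τ u v (γ s)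
            ≤ ((1 - s : ℝ) : EReal) * bdf2Psi E τ u v γ₀
              + ((s : ℝ) : EReal) * bdf2Psi E τ u v γ₁
              - ((1 / 2 * (3 / (2 * τ) + lam) * s * (1 - s) * dist γ₀ γ₁ ^ 2 : ℝ) : EReal))
    (u0pt : X) (K₀ K₁ K₂ K₃ : ℝ)
    (τ : ℕ → ℝ) (hτmem : ∀ n, τ n ∈ Set.Ioo (0 : ℝ) τs) (hτanti : StrictAnti τ)
    (hτlim : Tendsto τ atTop (nhds 0))
    (hτdiv : ∀ n, ∃ R : ℕ, τ n = (R : ℝ) * τ (n + 1))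
    (u : ℕ → ℕ → X)
    (hmin : ∀ n k : ℕ, ∀ w : X,
      bdf2Psi E (τ n) (u n k) (u n (k + 1)) (u n (k + 2))
        ≤ bdf2Psi E (τ n) (u n k) (u n (k + 1)) w)
    (hI0 : ∀ n, dist (u n 1) u0pt ≤ K₀ * τ n)
    (hI1 : ∀ n, E (u n 1) ≤ (K₁ : EReal) ∧ E (u n 0) ≤ (K₁ : EReal))
    (hI2 : ∀ n, dist (u n 0) (u n 1) ≤ K₂ * τ n)
    (hK3 : ∀ n, dist (u n 1) u0pt ≤ K₃ * τ n)
    (ulim : ℝ → X)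
    (hconv : TendstoLocallyUniformlyOn (fun n t => bdf2Interp (u n) (τ n) t) ulim atTop
      (Set.Ici (0 : ℝ))) :
    (∃ m : ℝ → ℝ,
      (∀ T : ℝ, 0 < T → IntegrableOn (fun r => m r ^ 2) (Set.Icc 0 T) volume)
      ∧ ∀ s t : ℝ, 0 ≤ s → s ≤ t →
          dist (ulim s) (ulim t) ≤ ∫ r in s..t, m r)
    ∧ ∀ s t : ℝ, 0 ≤ s → s ≤ t → ∀ w : X, E w ≠ ⊤ →
        (1 / 2) * dist (ulim t) w ^ 2 - (1 / 2) * dist (ulim s) w ^ 2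
          ≤ ∫ r in s..t,
              ((E w).toReal - (E (ulim r)).toReal - lam / 2 * dist (ulim r) w ^ 2) := by
  set D : Set X := {x | E x ≠ ⊤}
  set e : X → ℝ := fun x => (E x).toReal
  have hcoe : ∀ x ∈ D, ((e x : ℝ) : EReal) = E x := fun x hx => EReal.coe_toReal hx (hbot x)
  have hmem : ∀ n k, u n k ∈ D := by
    intro n k
    match k with
    | 0 => exact ne_top_of_le_ne_top (EReal.coe_ne_top _) (hI1 n).2
    | 1 => exact ne_top_of_le_ne_top (EReal.coe_ne_top _) (hI1 n).1
    | k + 2 =>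
      obtain ⟨w, hw⟩ := hdom
      exact energy_ne_top_of_minimizer (hmin n k w) hw
  have hfam : IsBdf2Family D e lam K₁ (K₂ ^ 2 * τs) τ u := by
    refine ⟨fun n => (hτmem n).1, fun n => ?_, hτlim, fun n k w hw => ?_, hmem, fun n => ?_,
      fun n => ?_, ?_⟩
    · exact (mul_le_mul_of_nonneg_left (hτmem n).2.le (neg_nonneg.2 hlam)).trans hlamτs
    · obtain ⟨γ, -, -, -, hγ⟩ := hE3 (τ n) (hτmem n) (u n k) (u n (k + 1)) (u n (k + 2)) w
        (hmem n _) hw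
      exact minimizer_quadratic_gap hbot (hmin n k) (hmem n _) hw hγ
    · rw [← EReal.coe_le_coe_iff, hcoe _ (hmem n 1)]
      exact (hI1 n).1
    · have hτ := hτmem n
      calc dist (u n 0) (u n 1) ^ 2 ≤ (K₂ * τ n) ^ 2 := by gcongr; exact hI2 n
        _ = K₂ ^ 2 * τ n * τ n := by ring
        _ ≤ K₂ ^ 2 * τs * τ n := by
          have h1 := hτ.1.le
          have h2 := hτ.2.le
          gcongr
    · obtain ⟨c, -, hc⟩ := EReal.lt_iff_exists_real_btwn.1 hE2
      refine ⟨c, 1 / (2 * τs), ustar, by positivity, fun x hx => ?_⟩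
      have h1 := hc.le.trans (hcstar.le.trans (iInf_le _ x))
      rw [← hcoe x hx, ← EReal.coe_add, EReal.coe_le_coe_iff, dist_comm] at h1
      linarith
  obtain ⟨V, hV, hVu⟩ := hfam.exists_monotone_action hconv
  refine ⟨exists_sq_integrable_speed hV hVu, fun s t hs hst w hw => ?_⟩
  have hlsc : ∀ r, 0 ≤ r → E (ulim r) ≤ liminf (fun n => E (bdf2Interp (u n) (τ n) r)) atTop :=
    fun r hr => hE1 _ _ (hconv.tendsto_at hr)
  have hlimmem : ∀ r, 0 ≤ r → ulim r ∈ D := by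
    intro r hr
    refine ne_top_of_le_ne_top (EReal.coe_ne_top (K₁ + K₂ ^ 2 * τs / 4)) ((hlsc r hr).trans ?_)
    refine (liminf_le_liminf (Eventually.of_forall fun n => ?_)).trans (liminf_const _).le
    exact (hcoe _ (hmem n _)).symm.le.trans (EReal.coe_le_coe_iff.2 (hfam.energy_le n _))
  refine hfam.evi_limit hconv hlimmem ?_ (fun r hr ε hε => ?_) hs hst hw
  · have hcont := hfam.continuous_limit_comp_max hconv
    have hl : LowerSemicontinuous fun r => E (ulim (max r 0)) := by
      refine lowerSemicontinuous_iff_isClosed_preimage.2 fun y => IsSeqClosed.isClosed ?_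
      intro rn r hrn hr
      refine (hE1 _ _ ((hcont.tendsto r).comp hr)).trans ?_
      exact (liminf_le_liminf (Eventually.of_forall hrn)).trans (liminf_const y).le
    exact hl.measurable.ereal_toReal
  · have hlt : ((e (ulim r) - ε : ℝ) : EReal) < E (ulim r) := by
      rw [← hcoe _ (hlimmem r hr), EReal.coe_lt_coe_iff]
      linarith
    filter_upwards [eventually_lt_of_lt_liminf (hlt.trans_le (hlsc r hr))] with n hn
    rw [← hcoe (bdf2Interp (u n) (τ n) r) (hmem n _), EReal.coe_lt_coe_iff] at hn
    linarith
end

section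
/- Let E(w) = max(w,0) on ℝ, let τ > 0, and let (u^k)_{k≥−1} be the BDF2 discrete solution with initial data u^{−1} = 1 + τ and u^0 = 1, i.e. for k ≥ 1, u^k is the unique minimizer over ℝ of w ↦ (1/τ)·(w − u^{k−1})² − (1/(4τ))·(w − u^{k−2})² + E(w). Then for every k ≥ 0 with 1 − kτ > 0 one has u^k = 1 − kτ. -/
/-- If the two previous values are `b + τ` and `b` with `b - τ > 0`, then any minimizer of the
BDF2 functional for `E(w) = max(w,0)` equals `b - τ`. -/
theorem bdf2_obstacle_step {τ b x : ℝ} (hτ : 0 < τ) (hb : 0 < b - τ)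
    (h : (1 / τ) * (x - b) ^ 2 - (1 / (4 * τ)) * (x - (b + τ)) ^ 2 + max x 0
      ≤ (1 / τ) * (b - τ - b) ^ 2 - (1 / (4 * τ)) * (b - τ - (b + τ)) ^ 2 + max (b - τ) 0) :
    x = b - τ := by
  rw [max_eq_left hb.le] at h
  have hx : x ≤ max x 0 := le_max_left x 0
  have key : ((1 / τ) * (x - b) ^ 2 - (1 / (4 * τ)) * (x - (b + τ)) ^ 2 + x)
      - ((1 / τ) * (b - τ - b) ^ 2 - (1 / (4 * τ)) * (b - τ - (b + τ)) ^ 2 + (b - τ))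
      = 3 / (4 * τ) * (x - (b - τ)) ^ 2 := by
    field_simp
    ring
  have hle : 3 / (4 * τ) * (x - (b - τ)) ^ 2 ≤ 0 := by linarith
  have hsq : (x - (b - τ)) ^ 2 ≤ 0 := nonpos_of_mul_nonpos_right hle (by positivity)
  exact sub_eq_zero.mp (pow_eq_zero_iff two_ne_zero |>.mp (le_antisymm hsq (sq_nonneg _)))

/-- for the BDF2 scheme on `ℝ` with potential `E(w) = max(w,0)` and initial
data `u^{−1} = 1 + τ`, `u^0 = 1` (encoded with index shift: `u k = u^{k−1}`), the discrete
solution is exact as long as it is positive: `u^k = 1 − kτ` whenever `1 − kτ > 0`. -/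
theorem bdf2_obstacle_exact_before_kink (τ : ℝ) (hτ : 0 < τ) (u : ℕ → ℝ)
    (h0 : u 0 = 1 + τ) (h1 : u 1 = 1)
    (hmin : ∀ k : ℕ, ∀ w : ℝ,
      (1 / τ) * (u (k + 2) - u (k + 1)) ^ 2 - (1 / (4 * τ)) * (u (k + 2) - u k) ^ 2
          + max (u (k + 2)) 0
        ≤ (1 / τ) * (w - u (k + 1)) ^ 2 - (1 / (4 * τ)) * (w - u k) ^ 2 + max w 0) :
    ∀ k : ℕ, 0 < 1 - (k : ℝ) * τ → u (k + 1) = 1 - (k : ℝ) * τ := by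
  have main : ∀ k : ℕ, 0 < 1 - (k : ℝ) * τ →
      u (k + 1) = 1 - (k : ℝ) * τ ∧ u k = u (k + 1) + τ := by
    intro k
    induction k with
    | zero => simp [h0, h1]
    | succ n ih =>
      intro hn
      push_cast at hn ⊢
      obtain ⟨hb, ha⟩ := ih (by linarith)
      have hmin' := hmin n (u (n + 1) - τ)
      rw [ha] at hmin'
      have hc := bdf2_obstacle_step hτ (by linarith) hmin'
      constructor <;> linarith
  exact fun k hk => (main k hk).1
end

section
/- Let E(w) = max(w,0) on ℝ, let τ > 0, and let (u^k)_{k≥−1} be the BDF2 discrete solution with initial data u^{−1} = 1 + τ and u^0 = 1, i.e. for k ≥ 1, u^k is the unique minimizer over ℝ of w ↦ (1/τ)·(w − u^{k−1})² − (1/(4τ))·(w − u^{k−2})² + E(w). Let N ≥ 1 be the smallest index with Nτ ≥ 1, and assume additionally that 1 − Nτ ∈ [−(2/3)τ, 0]. Then u^N = 0, u^{N−1} = 1 − (N−1)τ ∈ [τ/3, τ], and for every k > N: u^k = −(1/2)·(1 − 3^{−(k−N)})·u^{N−1}, so in particular u^k ≤ −(1/6)·(1 − 3^{−(k−N)})·τ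 < 0. Consequently the BDF2 approximation has an error of at least order τ at times beyond t = 1, excluding second order convergence in general. -/
/-- A point `p` satisfying the Euler-Lagrange equation of a BDF2 step for `max(w,0)`, with
subgradient `s` at `p`, is the only minimizer of the step functional. -/
theorem bdf2_step_eq_of_subgradient {τ a b v p s : ℝ} (hτ : 0 < τ)
    (hv : ∀ w : ℝ, (1 / τ) * (v - b) ^ 2 - (1 / (4 * τ)) * (v - a) ^ 2 + max v 0
      ≤ (1 / τ) * (w - b) ^ 2 - (1 / (4 * τ)) * (w - a) ^ 2 + max w 0)
    (hs0 : 0 ≤ s) (hs1 : s ≤ 1) (hsp : s * p = max p 0)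
    (hp : 3 * p - 4 * b + a + 2 * τ * s = 0) : v = p := by
  have hsv : s * v ≤ max v 0 := by
    rcases le_total v 0 with h | h
    · rw [max_eq_right h]
      exact mul_nonpos_of_nonneg_of_nonpos hs0 h
    · rw [max_eq_left h]
      exact mul_le_of_le_one_left h hs1
  have hle := hv p
  have hconv : (1 / τ) * (v - b) ^ 2 - (1 / (4 * τ)) * (v - a) ^ 2 + s * v
      - ((1 / τ) * (p - b) ^ 2 - (1 / (4 * τ)) * (p - a) ^ 2 + s * p)
      = 3 / (4 * τ) * (v - p) ^ 2 := by
    have ha : a = 4 * b - 3 * p - 2 * τ * s := by linarith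
    subst ha
    field_simp
    ring
  have hsq : 3 / (4 * τ) * (v - p) ^ 2 ≤ 0 := by linarith
  have hsq' : (v - p) ^ 2 ≤ 0 := nonpos_of_mul_nonpos_right hsq (by positivity)
  exact sub_eq_zero.mp (pow_eq_zero_iff two_ne_zero |>.mp (le_antisymm hsq' (sq_nonneg _)))

/-- for the BDF2 scheme on `ℝ` with potential `E(w) = max(w,0)` and initial
data `u^{−1} = 1 + τ`, `u^0 = 1` (index shift: `u k = u^{k−1}`), if `N` is the smallest
index with `Nτ ≥ 1` and in addition `1 − Nτ ∈ [−(2/3)τ, 0]`, then `u^N = 0`,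
`u^{N−1} = 1 − (N−1)τ ∈ [τ/3, τ]`, and for all `k > N` one has
`u^k = −(1/2)(1 − 3^{−(k−N)})·u^{N−1}`, hence `u^k ≤ −(1/6)(1 − 3^{−(k−N)})τ < 0`:
the approximation has a residual of order `τ` beyond `t = 1`. -/
theorem bdf2_obstacle_first_order_residual (τ : ℝ) (hτ : 0 < τ) (u : ℕ → ℝ)
    (h0 : u 0 = 1 + τ) (h1 : u 1 = 1)
    (hmin : ∀ k : ℕ, ∀ w : ℝ,
      (1 / τ) * (u (k + 2) - u (k + 1)) ^ 2 - (1 / (4 * τ)) * (u (k + 2) - u k) ^ 2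
          + max (u (k + 2)) 0
        ≤ (1 / τ) * (w - u (k + 1)) ^ 2 - (1 / (4 * τ)) * (w - u k) ^ 2 + max w 0)
    (N : ℕ) (hN1 : 1 ≤ N) (hNτ : 1 ≤ (N : ℝ) * τ)
    (hNmin : ∀ m : ℕ, m < N → (m : ℝ) * τ < 1)
    (hextra : 1 - (N : ℝ) * τ ∈ Set.Icc (-(2 / 3) * τ) 0) :
    u (N + 1) = 0
    ∧ u N = 1 - ((N : ℝ) - 1) * τ
    ∧ u N ∈ Set.Icc (τ / 3) τ
    ∧ ∀ k : ℕ, N < k →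
        u (k + 1) = -(1 / 2) * (1 - (1 / 3 : ℝ) ^ (k - N)) * u N
        ∧ u (k + 1) ≤ -(1 / 6) * (1 - (1 / 3 : ℝ) ^ (k - N)) * τ
        ∧ u (k + 1) < 0 := by
  obtain ⟨hlow, hup⟩ := hextra
  have hlinear : ∀ m : ℕ, m < N → u m = 1 - ((m : ℝ) - 1) * τ ∧ u (m + 1) = 1 - (m : ℝ) * τ := by
    intro m
    induction m with
    | zero => intro _; simp [h0, h1]
    | succ m ih =>
      intro hm
      obtain ⟨ha, hb⟩ := ih (by omega)
      have hpos := hNmin (m + 1) hm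
      refine ⟨by rw [hb]; push_cast; ring, ?_⟩
      refine bdf2_step_eq_of_subgradient hτ (hmin m) zero_le_one le_rfl ?_ ?_
      · rw [max_eq_left (by linarith), one_mul]
      · rw [ha, hb]; push_cast; ring
  obtain ⟨M, rfl⟩ : ∃ M, N = M + 1 := ⟨N - 1, by omega⟩
  obtain ⟨hM, hM'⟩ := hlinear M (by omega)
  push_cast at hlow hup ⊢
  have hzero : u (M + 2) = 0 := by
    refine bdf2_step_eq_of_subgradient (s := (3 * (1 - (M : ℝ) * τ) - τ) / (2 * τ)) hτ (hmin M)
      (div_nonneg (by linarith) (by positivity)) ?_ (by simp) ?_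
    · rw [div_le_one (by positivity)]; linarith
    · rw [hM, hM']; field_simp; ring
  have hlb : τ / 3 ≤ u (M + 1) := by rw [hM']; linarith
  have hpow : ∀ j : ℕ, (1 / 3 : ℝ) ^ j ≤ 1 := fun j => pow_le_one₀ (by norm_num) (by norm_num)
  have htail : ∀ j : ℕ, u (M + 2 + j) = -(1 / 2) * (1 - (1 / 3 : ℝ) ^ j) * u (M + 1)
      ∧ u (M + 2 + j + 1) = -(1 / 2) * (1 - (1 / 3 : ℝ) ^ (j + 1)) * u (M + 1) := by
    have hstep : ∀ k j : ℕ, 3 * (-(1 / 2) * (1 - (1 / 3 : ℝ) ^ j) * u (M + 1))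
        - 4 * u (k + 1) + u k = 0 →
        u (k + 2) = -(1 / 2) * (1 - (1 / 3 : ℝ) ^ j) * u (M + 1) := by
      intro k j hk
      refine bdf2_step_eq_of_subgradient (s := 0) hτ (hmin k) le_rfl zero_le_one ?_ (by linarith)
      rw [zero_mul, max_eq_right]
      have := mul_nonneg (sub_nonneg.mpr (hpow j)) (by linarith : 0 ≤ u (M + 1))
      linarith
    intro j
    induction j with
    | zero =>
      refine ⟨by simp [hzero], hstep (M + 1) 1 ?_⟩
      rw [hzero]; ring
    | succ j ih =>
      refine ⟨ih.2, hstep (M + 2 + j) (j + 2) ?_⟩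
      rw [ih.1, ih.2]; ring
  refine ⟨hzero, by rw [hM']; ring, ⟨hlb, by rw [hM']; linarith⟩, fun k hk => ?_⟩
  obtain ⟨j, rfl⟩ : ∃ j, k = M + 1 + j := ⟨k - (M + 1), by omega⟩
  have heq := (htail j).1
  rw [show M + 2 + j = M + 1 + j + 1 by ring] at heq
  rw [Nat.add_sub_cancel_left]
  have hlt : 0 < 1 - (1 / 3 : ℝ) ^ j :=
    sub_pos.mpr (pow_lt_one₀ (by norm_num) (by norm_num) (by omega))
  have hbound := mul_le_mul_of_nonneg_left hlb hlt.le
  have hpos := mul_pos hlt hτ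
  exact ⟨heq, by linarith, by linarith⟩
end

section
/- Let λ ≤ 0, let 0 < η ≤ τ with (−λ)·τ ≤ 1/2, and suppose τ = R·η for some natural number R ≥ 1. Define g_t := 1/(2 + √(1 − 2λt)) and h_t := 2 − √(1 − 2λt) for t > 0. Then 1 − h_τ·(h_η)^R·g_τ > 0 and the elementary inequality 1/(2·h_η) − g_τ/(1 − h_τ·(h_η)^R·g_τ) ≤ −3·λ·τ holds. -/
/-- the elementary inequality
`1/(2h_η) − g_τ/(1 − h_τ·h_η^R·g_τ) ≤ −3λτ` (together with positivity of the denominator)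
for `g_t = 1/(2 + √(1 − 2λt))`, `h_t = 2 − √(1 − 2λt)`, `λ ≤ 0`, `0 < η ≤ τ`,
`(−λ)τ ≤ 1/2` and `τ = R·η`, `R ≥ 1`. -/
theorem bdf2_comparison_elementary_inequality (lam τ η : ℝ) (hlam : lam ≤ 0)
    (hη : 0 < η) (hητ : η ≤ τ) (hlamτ : (-lam) * τ ≤ 1 / 2)
    (R : ℕ) (hR : 1 ≤ R) (hτη : τ = (R : ℝ) * η)
    (g : ℝ → ℝ) (h : ℝ → ℝ)
    (hg : ∀ t : ℝ, g t = 1 / (2 + Real.sqrt (1 - 2 * lam * t)))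
    (hh : ∀ t : ℝ, h t = 2 - Real.sqrt (1 - 2 * lam * t)) :
    0 < 1 - h τ * (h η) ^ R * g τ
    ∧ 1 / (2 * h η) - g τ / (1 - h τ * (h η) ^ R * g τ) ≤ -3 * lam * τ := by
  have hτ : 0 < τ := hη.trans_le hητ
  obtain ⟨x, hx⟩ : ∃ x, x = -lam * τ := ⟨_, rfl⟩
  obtain ⟨y, hy⟩ : ∃ y, y = -lam * η := ⟨_, rfl⟩
  have hy0 : 0 ≤ y := hy ▸ mul_nonneg (by linarith) hη.le
  have hyx : y ≤ x := by rw [hx, hy]; exact mul_le_mul_of_nonneg_left hητ (by linarith)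
  have hx2 : x ≤ 1 / 2 := hx ▸ hlamτ
  have hRy : (R : ℝ) * y = x := by rw [hx, hy, hτη]; ring
  obtain ⟨s, hs⟩ : ∃ s, s = √(1 + 2 * x) := ⟨_, rfl⟩
  obtain ⟨r, hr⟩ : ∃ r, r = √(1 + 2 * y) := ⟨_, rfl⟩
  have hgτ : g τ = 1 / (2 + s) := by rw [hg, hs, hx]; ring_nf
  have hhτ : h τ = 2 - s := by rw [hh, hs, hx]; ring_nf
  have hhη : h η = 2 - r := by rw [hh, hr, hy]; ring_nf
  have hs1 : 1 ≤ s := hs ▸ Real.one_le_sqrt.2 (by linarith)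
  have hr1 : 1 ≤ r := hr ▸ Real.one_le_sqrt.2 (by linarith)
  have hsx : s ≤ 1 + x := hs ▸ Real.sqrt_le_iff.2 ⟨by linarith, by nlinarith [sq_nonneg x]⟩
  have hry : r ≤ 1 + y := hr ▸ Real.sqrt_le_iff.2 ⟨by linarith, by nlinarith [sq_nonneg y]⟩
  obtain ⟨P, hP⟩ : ∃ P, P = (2 - r) ^ R := ⟨_, rfl⟩
  have hP1 : P ≤ 1 := hP ▸ pow_le_one₀ (by linarith) (by linarith)
  -- Bernoulli inequality
  have hPx : 1 - x ≤ P := by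
    have hB := one_add_mul_le_pow (show (-2 : ℝ) ≤ 1 - r by linarith) R
    rw [show 1 + (1 - r) = 2 - r by ring, ← hP] at hB
    have : (R : ℝ) * (r - 1) ≤ R * y :=
      mul_le_mul_of_nonneg_left (by linarith) (Nat.cast_nonneg R)
    linarith
  have hD : 0 < 2 + s - (2 - s) * P := by nlinarith
  have hD' : 2 + s - (2 - s) * P ≤ 2 + 3 * x := by nlinarith
  have hden : 1 - h τ * (h η) ^ R * g τ = (2 + s - (2 - s) * P) / (2 + s) := by
    rw [hgτ, hhτ, hhη, ← hP]
    field_simp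
  rw [hden]
  refine ⟨div_pos hD (by linarith), ?_⟩
  have hquot : g τ / ((2 + s - (2 - s) * P) / (2 + s)) = 1 / (2 + s - (2 - s) * P) := by
    rw [hgτ]
    field_simp
  have hupper : 1 / (2 * (2 - r)) ≤ 1 / 2 + x := by
    rw [div_le_iff₀ (by linarith)]
    nlinarith
  have hlower : 1 / 2 - 3 * x / 4 ≤ 1 / (2 + s - (2 - s) * P) := by
    refine le_trans ?_ (one_div_le_one_div_of_le hD hD')
    rw [le_div_iff₀ (by linarith)]
    nlinarith [sq_nonneg x]
  rw [hquot, hhη, show -3 * lam * τ = 3 * x by rw [hx]; ring]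
  linarith
end
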